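/- For every n ≥ 1 and every bijection σ : Fin n → Fin n, every triple diagram whose arcs realize σ (loops permitted) has at least N(σ) triple points, where N(σ) is the number of ordered pairs (i, j) of indices with i ≠ j such that, writing a = 2i, b = 2j, c = 2σ(i)+1, d = 2σ(j)+1 as integers in {0,…,2n−1}, either a < b < c < d or d < c < b < a. Consequently the minimum number of triple points over all triple diagrams whose arcs realize σ equals N(σ). -/

import Mathlib

open Set Metric Real
open scoped RealInnerProductSpace

noncomputable section

/-- The Euclidean plane. -/
abbrev Plane : Type := EuclideanSpace ℝ (Fin 2)

/-- The point of the unit circle at angle `θ`. -/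
def unitPt (θ : ℝ) : Plane := (WithLp.equiv 2 (Fin 2 → ℝ)).symm ![Real.cos θ, Real.sin θ]

/-- The `2n` marked boundary points `v_k = (cos (kπ/n), sin (kπ/n))`. -/
def bpoint (n k : ℕ) : Plane := unitPt (k * Real.pi / n)

/-- The underlying geometric data of a diagram in the closed unit disk:
`na` smooth immersed arcs with endpoints on the boundary circle (transverse to it,
pairwise distinct endpoints, interior in the open disk) and `nl` smooth immersed
loops (1-periodic) contained in the open disk. -/
structure PreDiagram (na nl : ℕ) where
  arc : Fin na → ℝ → Plane
  loop : Fin nl → ℝ → Plane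
  arc_smooth : ∀ i, ContDiff ℝ (⊤ : ℕ∞) (arc i)
  loop_smooth : ∀ i, ContDiff ℝ (⊤ : ℕ∞) (loop i)
  loop_periodic : ∀ i, Function.Periodic (loop i) 1
  arc_immersed : ∀ i, ∀ t ∈ Icc (0:ℝ) 1, deriv (arc i) t ≠ 0
  loop_immersed : ∀ i t, deriv (loop i) t ≠ 0
  arc_in_disk : ∀ i, ∀ t ∈ Icc (0:ℝ) 1, ‖arc i t‖ ≤ 1
  arc_interior : ∀ i, ∀ t ∈ Ioo (0:ℝ) 1, ‖arc i t‖ < 1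
  arc_start_bdry : ∀ i, ‖arc i 0‖ = 1
  arc_end_bdry : ∀ i, ‖arc i 1‖ = 1
  arc_transverse_start : ∀ i, ⟪deriv (arc i) 0, arc i 0⟫ ≠ 0
  arc_transverse_end : ∀ i, ⟪deriv (arc i) 1, arc i 1⟫ ≠ 0
  loop_in_disk : ∀ i t, ‖loop i t‖ < 1
  endpoints_distinct :
    Function.Injective (Sum.elim (fun i => arc i 0) (fun i => arc i 1) :
      Fin na ⊕ Fin na → Plane)

variable {na nl : ℕ}

/-- The passages of the strands of a diagram through the point `p`: parameter values
(with the strand they belong to) mapping to `p`.  For arcs the relevant parameters lie in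
`(0,1)`; for loops we take one period `[0,1)`. -/
def PreDiagram.passages (D : PreDiagram na nl) (p : Plane) :
    Set ((Fin na × ℝ) ⊕ (Fin nl × ℝ)) :=
  Sum.elim (fun q => q.2 ∈ Ioo (0:ℝ) 1 ∧ D.arc q.1 q.2 = p)
           (fun q => q.2 ∈ Ico (0:ℝ) 1 ∧ D.loop q.1 q.2 = p)

/-- The (forward) tangent vector of the branch through a given passage. -/
def PreDiagram.tangent (D : PreDiagram na nl) :
    (Fin na × ℝ) ⊕ (Fin nl × ℝ) → Plane :=
  Sum.elim (fun q => deriv (D.arc q.1) q.2) (fun q => deriv (D.loop q.1) q.2)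

/-- A multiple point: a point traversed more than once by the strands,
counting with multiplicity in the parameters. -/
def PreDiagram.IsMultiplePoint (D : PreDiagram na nl) (p : Plane) : Prop :=
  ¬ (D.passages p).Subsingleton

/-- A triple diagram: a diagram whose set of multiple points is finite, such that through
each multiple point exactly three branches pass, with pairwise linearly independent
tangent vectors, and such that at each such triple point the six tangent rays of the
three branches alternate between outgoing and incoming in cyclic order (equivalently,
some positive combination of the three forward tangent vectors vanishes). -/
structure TripleDiagram (na nl : ℕ) extends PreDiagram na nl where
  multiple_finite : {p : Plane | toPreDiagram.IsMultiplePoint p}.Finite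
  triple : ∀ p : Plane, toPreDiagram.IsMultiplePoint p →
    (toPreDiagram.passages p).ncard = 3
  branches_transverse : ∀ p : Plane, toPreDiagram.IsMultiplePoint p →
    ∀ q₁ ∈ toPreDiagram.passages p, ∀ q₂ ∈ toPreDiagram.passages p, q₁ ≠ q₂ →
      LinearIndependent ℝ ![toPreDiagram.tangent q₁, toPreDiagram.tangent q₂]
  alternating : ∀ p : Plane, toPreDiagram.IsMultiplePoint p →
    ∃ q₁ q₂ q₃, toPreDiagram.passages p = {q₁, q₂, q₃} ∧
      ∃ a b c : ℝ, 0 < a ∧ 0 < b ∧ 0 < c ∧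
        a • toPreDiagram.tangent q₁ + b • toPreDiagram.tangent q₂ +
          c • toPreDiagram.tangent q₃ = 0

/-- The number of triple points of a triple diagram. -/
def TripleDiagram.tripleCount (D : TripleDiagram na nl) : ℕ :=
  {p : Plane | D.toPreDiagram.IsMultiplePoint p}.ncard

/-- A triple diagram (with `n` arcs) realizes the bijection `σ` if its `i`-th arc runs from
the 'in' point `v_{2i}` to the 'out' point `v_{2σ(i)+1}`. -/
def Realizes {n nl : ℕ} (D : TripleDiagram n nl) (σ : Equiv.Perm (Fin n)) : Prop :=
  ∀ i : Fin n, D.arc i 0 = bpoint n (2 * (i : ℕ)) ∧ D.arc i 1 = bpoint n (2 * (σ i : ℕ) + 1)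

/-- `N(σ)`: the number of ordered pairs `(i,j)`, `i ≠ j`, such that with `a = 2i`, `b = 2j`,
`c = 2σ(i)+1`, `d = 2σ(j)+1` in `{0,…,2n−1}`, either `a < b < c < d` or `d < c < b < a`. -/
def Ncross (n : ℕ) (σ : Equiv.Perm (Fin n)) : ℕ :=
  (Finset.univ.filter fun ij : Fin n × Fin n =>
    ij.1 ≠ ij.2 ∧
      ((2 * (ij.1 : ℕ) < 2 * (ij.2 : ℕ) ∧
        2 * (ij.2 : ℕ) < 2 * (σ ij.1 : ℕ) + 1 ∧
        2 * (σ ij.1 : ℕ) + 1 < 2 * (σ ij.2 : ℕ) + 1) ∨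
       (2 * (σ ij.2 : ℕ) + 1 < 2 * (σ ij.1 : ℕ) + 1 ∧
        2 * (σ ij.1 : ℕ) + 1 < 2 * (ij.2 : ℕ) ∧
        2 * (ij.2 : ℕ) < 2 * (ij.1 : ℕ)))).card

end

/-!
Lower bound. Two arcs of the disk that run in the same direction along the circle cut open at `v₀`
are comparable: the one with the smaller source comes first. This is a strict partial order, in
which loops are incomparable to everything. Add up the algebraic intersection numbers of the pairs
`i < j`. The intersection number of two arcs `f`, `g` is the degree of the map
`(s, t) ↦ g t - f s`, so by Green's theorem it depends on the endpoints only, and for `i < j` it is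
`1` or `0` according to whether the pair contributes to `N(σ)`. On the other hand, if the tangent
rays alternate at a triple point, its three branches cross each other cyclically with the same
sign, and since a strict order contains no cycle the triple point contributes at most `1`.

Upper bound. Cut the disk open into a half plane, so that every strand comes up from a position on
the line and goes down to another one, sources and targets alternating along the line. If the ends
of some strand are adjacent, that strand can be drawn as a small cap below all the others. Otherwise
there are consecutive ends `x < y < z` of three strands, `x` and `z` being sources and `y` a target,
such that the strand starting at `x` ends to the right of `z` and the one starting at `z` ends to
the left of `x`. Reversing the order of these three ends costs one triple point and removes exactly
one of the pairs counted by `N(σ)`, so induction yields a diagram with `N(σ)` triple points.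
-/

section LocalDegree

open MeasureTheory Filter Topology

variable {E : Type*} [NormedAddCommGroup E] [NormedSpace ℝ E] [FiniteDimensional ℝ E]
  {F : E → E}

theorem hasStrictFDerivAt_equiv_of_det_ne_zero (hF : ContDiff ℝ 1 F) {z : E}
    (hz : (fderiv ℝ F z).det ≠ 0) :
    HasStrictFDerivAt F
      ((fderiv ℝ F z).toContinuousLinearEquivOfDetNeZero hz : E →L[ℝ] E) z := by
  rw [ContinuousLinearMap.coe_toContinuousLinearEquivOfDetNeZero]
  exact hF.contDiffAt.hasStrictFDerivAt one_ne_zero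

theorem exists_isOpen_injOn_sign_det_fderiv_eq (hF : ContDiff ℝ 1 F) {z : E}
    (hz : (fderiv ℝ F z).det ≠ 0) {s : Set E} (hs : s ∈ 𝓝 z) :
    ∃ U ⊆ s, IsOpen U ∧ z ∈ U ∧ InjOn F U ∧
      ∀ x ∈ U, SignType.sign (fderiv ℝ F x).det = SignType.sign (fderiv ℝ F z).det := by
  have hF' := hasStrictFDerivAt_equiv_of_det_ne_zero hF hz
  have hinj := (hF'.toOpenPartialHomeomorph F).injOn
  have hsource := (hF'.toOpenPartialHomeomorph F).open_source.mem_nhds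
    hF'.mem_toOpenPartialHomeomorph_source
  have hcont : ContinuousAt (fun x => SignType.sign (fderiv ℝ F x).det) z :=
    ContinuousAt.comp (continuousAt_sign_of_ne_zero hz) (ContinuousLinearMap.continuous_det.comp
      (hF.continuous_fderiv one_ne_zero)).continuousAt
  have hsign : ∀ᶠ x in 𝓝 z,
      SignType.sign (fderiv ℝ F x).det = SignType.sign (fderiv ℝ F z).det :=
    hcont.eventually_mem ((isOpen_discrete {_}).mem_nhds rfl)
  obtain ⟨U, hU, hUo, hzU⟩ := _root_.mem_nhds_iff.1 (inter_mem (inter_mem hsource hs) hsign)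
  exact ⟨U, fun x hx => (hU hx).1.2, hUo, hzU,
    fun x hx y hy hxy => hinj (hU hx).1.1 (hU hy).1.1 hxy, fun x hx => (hU hx).2⟩

theorem exists_pairwiseDisjoint_isOpen_injOn (hF : ContDiff ℝ 1 F) {K : Set E} {Z : Finset E}
    (hZ : ∀ z ∈ Z, K ∈ 𝓝 z ∧ (fderiv ℝ F z).det ≠ 0) :
    ∃ W : E → Set E, (∀ z ∈ Z, W z ⊆ K ∧ IsOpen (W z) ∧ z ∈ W z ∧ InjOn F (W z) ∧
      ∀ x ∈ W z, SignType.sign (fderiv ℝ F x).det = SignType.sign (fderiv ℝ F z).det) ∧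
      (Z : Set E).PairwiseDisjoint W := by
  choose! U hUK hUo hzU hUinj hUsign using fun z hz =>
    exists_isOpen_injOn_sign_det_fderiv_eq hF (hZ z hz).2 (hZ z hz).1
  obtain ⟨V, hV, hVdisj⟩ := Z.finite_toSet.t2_separation
  refine ⟨fun z => U z ∩ V z, fun z hz => ⟨inter_subset_left.trans (hUK z hz),
    (hUo z hz).inter (hV z).2, ⟨hzU z hz, (hV z).1⟩, (hUinj z hz).mono inter_subset_left,
    fun x hx => hUsign z hz x hx.1⟩, hVdisj.mono_on fun z _ => inter_subset_right⟩

variable [MeasurableSpace E] [BorelSpace E] (μ : Measure E) [μ.IsAddHaarMeasure]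

theorem setIntegral_comp_mul_det_fderiv_of_injOn (hF : Differentiable ℝ F) {U : Set E}
    (hU : MeasurableSet U) (hinj : InjOn F U) {c : SignType}
    (hc : ∀ x ∈ U, SignType.sign (fderiv ℝ F x).det = c) {φ : E → ℝ}
    (hφ : ∀ y ∉ F '' U, φ y = 0) :
    ∫ x in U, φ (F x) * (fderiv ℝ F x).det ∂μ = c * ∫ y, φ y ∂μ := by
  calc ∫ x in U, φ (F x) * (fderiv ℝ F x).det ∂μ
      = ∫ x in U, (c : ℝ) * (|(fderiv ℝ F x).det| • φ (F x)) ∂μ := by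
        refine setIntegral_congr_fun hU fun x hx => ?_
        simp only [smul_eq_mul, ← hc x hx]
        rw [← mul_assoc, sign_mul_abs, mul_comm]
    _ = c * ∫ y in F '' U, φ y ∂μ := by
        rw [integral_const_mul, integral_image_eq_integral_abs_det_fderiv_smul μ hU
          (fun x _ => (hF x).hasFDerivAt.hasFDerivWithinAt) hinj]
    _ = c * ∫ y, φ y ∂μ := by
        rw [setIntegral_eq_integral_of_forall_compl_eq_zero hφ]

/-- Near a nondegenerate zero `F` is a diffeomorphism, so a bump `φ` concentrated near `0` pulls
back to one signed copy of itself around each zero. -/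
theorem eventually_setIntegral_comp_mul_det_fderiv (hF : ContDiff ℝ 1 F) {K : Set E}
    (hK : IsCompact K) {Z : Finset E} (hKZ : ∀ x ∈ K, F x = 0 → x ∈ Z)
    (hZ : ∀ z ∈ Z, F z = 0 ∧ K ∈ 𝓝 z ∧ (fderiv ℝ F z).det ≠ 0) :
    ∀ᶠ ε in 𝓝[>] (0 : ℝ), ∀ φ : E → ℝ, Continuous φ → (∀ y, ε ≤ ‖y‖ → φ y = 0) →
      ∫ x in K, φ (F x) * (fderiv ℝ F x).det ∂μ =
        (∑ z ∈ Z, (SignType.sign (fderiv ℝ F z).det : ℝ)) * ∫ y, φ y ∂μ := by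
  obtain ⟨W, hW, hdisj⟩ := exists_pairwiseDisjoint_isOpen_injOn hF fun z hz => (hZ z hz).2
  choose! hWK hWo hzW hinj hsign using hW
  obtain ⟨m, hm, hmF⟩ : ∃ m, 0 < m ∧ ∀ x ∈ K \ ⋃ z ∈ Z, W z, m ≤ ‖F x‖ :=
    (hK.diff (isOpen_biUnion hWo)).exists_forall_le' hF.continuous.norm.continuousOn
      fun x hx => norm_pos_iff.2 fun h0 =>
        hx.2 (mem_biUnion (Finset.mem_coe.2 (hKZ x hx.1 h0)) (hzW x (hKZ x hx.1 h0)))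
  have hball : ∀ᶠ ε in 𝓝[>] (0 : ℝ), ∀ z ∈ Z, ball (0 : E) ε ⊆ F '' W z := by
    refine (Finset.eventually_all Z).2 fun z hz => ?_
    have himage : F '' W z ∈ 𝓝 (F z) := by
      rw [← (hasStrictFDerivAt_equiv_of_det_ne_zero hF (hZ z hz).2.2).map_nhds_eq_of_equiv]
      exact image_mem_map ((hWo z hz).mem_nhds (hzW z hz))
    obtain ⟨δ, hδ, hδW⟩ := Metric.mem_nhds_iff.1 ((hZ z hz).1 ▸ himage)
    filter_upwards [Ioo_mem_nhdsGT hδ] with ε hε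
    exact (ball_subset_ball hε.2.le).trans hδW
  filter_upwards [hball, Ioo_mem_nhdsGT hm] with ε hεW hεm φ hφ hφ0
  have hcont : Continuous fun x => φ (F x) * (fderiv ℝ F x).det :=
    (hφ.comp hF.continuous).mul
      (ContinuousLinearMap.continuous_det.comp (hF.continuous_fderiv one_ne_zero))
  rw [setIntegral_eq_of_subset_of_forall_sdiff_eq_zero hK.measurableSet (iUnion₂_subset hWK)
      fun x hx => by rw [hφ0 _ (hεm.2.le.trans (hmF x hx)), zero_mul],
    integral_biUnion_finset Z (fun z hz => (hWo z hz).measurableSet) hdisj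
      fun z hz => (hcont.continuousOn.integrableOn_compact hK).mono_set (hWK z hz),
    Finset.sum_mul]
  refine Finset.sum_congr rfl fun z hz => setIntegral_comp_mul_det_fderiv_of_injOn μ
    (hF.differentiable one_ne_zero) (hWo z hz).measurableSet (hinj z hz) (hsign z hz)
    fun y hy => hφ0 y ?_
  by_contra! hlt
  exact hy (hεW z hz (mem_ball_zero_iff.2 hlt))

end LocalDegree

section Cross

/-- The signed area of the parallelogram spanned by two plane vectors: its sign is the sign of
the crossing of two curves with these velocities. -/
def cross (u v : ℂ) : ℝ := u.re * v.im - u.im * v.re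

theorem cross_eq_im (u v : ℂ) : cross u v = (starRingEnd ℂ u * v).im := by
  simp [cross]; ring

theorem cross_neg_left (u v : ℂ) : cross (-u) v = -cross u v := by simp [cross]; ring

theorem cross_neg_right (u v : ℂ) : cross u (-v) = -cross u v := by simp [cross]; ring

theorem cross_swap (u v : ℂ) : cross u v = -cross v u := by simp [cross]; ring

theorem inner_mul_cross_sub (w u v : ℂ) :
    ⟪w, u⟫ * cross w v - ⟪w, v⟫ * cross w u = ‖w‖ ^ 2 * cross u v := by
  simp only [cross, Complex.inner, Complex.sq_norm, Complex.normSq_apply, Complex.mul_re,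
    Complex.conj_re, Complex.conj_im]
  ring

theorem contDiff_cross {E : Type*} [NormedAddCommGroup E] [NormedSpace ℝ E] {k : WithTop ℕ∞}
    {u v : E → ℂ} (hu : ContDiff ℝ k u) (hv : ContDiff ℝ k v) :
    ContDiff ℝ k fun x => cross (u x) (v x) := by
  simp only [cross_eq_im]
  exact Complex.imCLM.contDiff.comp ((Complex.conjCLE.contDiff.comp hu).mul hv)

theorem hasDerivAt_cross_const {u : ℝ → ℂ} {u' : ℂ} {t : ℝ} (hu : HasDerivAt u u' t) (v : ℂ) :
    HasDerivAt (fun t => cross (u t) v) (cross u' v) t := by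
  simp only [cross_eq_im]
  exact Complex.imCLM.hasFDerivAt.comp_hasDerivAt t (hu.star.mul_const v)

end Cross

section Green

open MeasureTheory

theorem setIntegral_Icc_curl_eq_boundary {P Q : ℝ × ℝ → ℝ} (hP : ContDiff ℝ 1 P)
    (hQ : ContDiff ℝ 1 Q) {a b : ℝ × ℝ} (hab : a ≤ b) :
    ∫ x in Icc a b, (fderiv ℝ Q x (1, 0) - fderiv ℝ P x (0, 1)) =
      (∫ t in a.2..b.2, Q (b.1, t)) - (∫ t in a.2..b.2, Q (a.1, t)) -
        ((∫ s in a.1..b.1, P (s, b.2)) - ∫ s in a.1..b.1, P (s, a.2)) := by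
  have hcont : Continuous fun x => fderiv ℝ Q x (1, 0) + (-fderiv ℝ P x) (0, 1) :=
    ((hQ.continuous_fderiv one_ne_zero).clm_apply continuous_const).add
      ((hP.continuous_fderiv one_ne_zero).neg.clm_apply continuous_const)
  have hdiv := integral_divergence_prod_Icc_of_hasFDerivAt_of_le Q (fun x => -P x)
    (fderiv ℝ Q) (fun x => -fderiv ℝ P x) a b hab hQ.continuous.continuousOn
    hP.continuous.neg.continuousOn
    (fun x _ => (hQ.differentiable one_ne_zero x).hasFDerivAt)
    (fun x _ => (hP.differentiable one_ne_zero x).hasFDerivAt.neg)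
    (hcont.continuousOn.integrableOn_compact isCompact_Icc)
  simp only [neg_apply, ← sub_eq_add_neg,
    intervalIntegral.integral_neg] at hdiv
  rw [hdiv]
  ring

theorem fderiv_apply_one_zero {E : Type*} [NormedAddCommGroup E] [NormedSpace ℝ E]
    {Q : ℝ × ℝ → E} {s t : ℝ} {q : E} (hQ : DifferentiableAt ℝ Q (s, t))
    (hq : HasDerivAt (fun s => Q (s, t)) q s) : fderiv ℝ Q (s, t) (1, 0) = q :=
  (hQ.hasFDerivAt.comp_hasDerivAt s
    ((hasDerivAt_id s).prodMk (hasDerivAt_const s t))).unique hq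

theorem fderiv_apply_zero_one {E : Type*} [NormedAddCommGroup E] [NormedSpace ℝ E]
    {Q : ℝ × ℝ → E} {s t : ℝ} {q : E} (hQ : DifferentiableAt ℝ Q (s, t))
    (hq : HasDerivAt (fun t => Q (s, t)) q t) : fderiv ℝ Q (s, t) (0, 1) = q :=
  (hQ.hasFDerivAt.comp_hasDerivAt t
    ((hasDerivAt_const t s).prodMk (hasDerivAt_id t))).unique hq

variable {f g : ℝ → ℂ} {h : ℝ → ℝ}

theorem contDiff_deriv_of_contDiff_two (hf : ContDiff ℝ 2 f) : ContDiff ℝ 1 (deriv f) :=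
  ContDiff.iterate_deriv' 1 1 hf

theorem contDiff_comp_norm_sq_mul_cross (hh : ContDiff ℝ 1 h) {w v : ℝ × ℝ → ℂ}
    (hw : ContDiff ℝ 1 w) (hv : ContDiff ℝ 1 v) :
    ContDiff ℝ 1 fun x => h (‖w x‖ ^ 2) * cross (w x) (v x) :=
  (hh.comp (hw.norm_sq ℝ)).mul (contDiff_cross hw hv)

theorem hasDerivAt_comp_norm_sq_mul_cross (hh : ContDiff ℝ 1 h) {w : ℝ → ℂ} {w' : ℂ} {t : ℝ}
    (hw : HasDerivAt w w' t) (v : ℂ) :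
    HasDerivAt (fun t => h (‖w t‖ ^ 2) * cross (w t) v)
      (deriv h (‖w t‖ ^ 2) * (2 * ⟪w t, w'⟫) * cross (w t) v +
        h (‖w t‖ ^ 2) * cross w' v) t :=
  (((hh.differentiable one_ne_zero _).hasDerivAt).comp t hw.norm_sq).mul
    (hasDerivAt_cross_const hw v)

theorem curl_comp_norm_sq_mul_cross {f' g' : ℝ → ℂ} (hh : ContDiff ℝ 1 h) {s t : ℝ}
    (hf : HasDerivAt f (f' s) s) (hg : HasDerivAt g (g' t) t)
    (hQ : DifferentiableAt ℝ (fun x : ℝ × ℝ =>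
      h (‖g x.2 - f x.1‖ ^ 2) * cross (g x.2 - f x.1) (g' x.2)) (s, t))
    (hP : DifferentiableAt ℝ (fun x : ℝ × ℝ =>
      h (‖g x.2 - f x.1‖ ^ 2) * cross (g x.2 - f x.1) (-f' x.1)) (s, t)) :
    fderiv ℝ (fun x : ℝ × ℝ =>
        h (‖g x.2 - f x.1‖ ^ 2) * cross (g x.2 - f x.1) (g' x.2)) (s, t) (1, 0) -
      fderiv ℝ (fun x : ℝ × ℝ =>
        h (‖g x.2 - f x.1‖ ^ 2) * cross (g x.2 - f x.1) (-f' x.1)) (s, t) (0, 1) =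
      -(2 * deriv (fun r => r * h r) (‖g t - f s‖ ^ 2) * cross (f' s) (g' t)) := by
  rw [fderiv_apply_one_zero hQ (hasDerivAt_comp_norm_sq_mul_cross hh (hf.const_sub (g t)) (g' t)),
    fderiv_apply_zero_one hP (hasDerivAt_comp_norm_sq_mul_cross hh (hg.sub_const (f s)) (-f' s))]
  have hderiv : deriv (fun r => r * h r) (‖g t - f s‖ ^ 2) =
      1 * h (‖g t - f s‖ ^ 2) + ‖g t - f s‖ ^ 2 * deriv h (‖g t - f s‖ ^ 2) :=
    ((hasDerivAt_id _).mul ((hh.differentiable one_ne_zero _).hasDerivAt)).deriv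
  rw [hderiv, cross_swap (g' t) (-f' s)]
  simp only [inner_neg_right, cross_neg_left, cross_neg_right]
  linear_combination
    -2 * deriv h (‖g t - f s‖ ^ 2) * inner_mul_cross_sub (g t - f s) (f' s) (g' t)

/-- Green's theorem for the pullback of the `1`-form `h (‖w‖ ^ 2) (w₁ dw₂ - w₂ dw₁)` under
`(s, t) ↦ w = g t - f s`. -/
theorem setIntegral_deriv_mul_cross_deriv (hf : ContDiff ℝ 2 f) (hg : ContDiff ℝ 2 g)
    (hh : ContDiff ℝ 1 h) {a b : ℝ × ℝ} (hab : a ≤ b) :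
    ∫ x in Icc a b, 2 * deriv (fun r => r * h r) (‖g x.2 - f x.1‖ ^ 2) *
        cross (deriv f x.1) (deriv g x.2) =
      (∫ t in a.2..b.2, h (‖g t - f a.1‖ ^ 2) * cross (g t - f a.1) (deriv g t)) -
        (∫ t in a.2..b.2, h (‖g t - f b.1‖ ^ 2) * cross (g t - f b.1) (deriv g t)) +
      ((∫ s in a.1..b.1, h (‖f s - g b.2‖ ^ 2) * cross (f s - g b.2) (deriv f s)) -
        ∫ s in a.1..b.1, h (‖f s - g a.2‖ ^ 2) * cross (f s - g a.2) (deriv f s)) := by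
  have hw : ContDiff ℝ 1 fun x : ℝ × ℝ => g x.2 - f x.1 :=
    ((hg.of_le one_le_two).comp contDiff_snd).sub ((hf.of_le one_le_two).comp contDiff_fst)
  have hQ := contDiff_comp_norm_sq_mul_cross hh hw
    ((contDiff_deriv_of_contDiff_two hg).comp contDiff_snd)
  have hP := contDiff_comp_norm_sq_mul_cross hh hw
    ((contDiff_deriv_of_contDiff_two hf).comp contDiff_fst).neg
  have hedge : ∀ t s : ℝ, h (‖g t - f s‖ ^ 2) * cross (g t - f s) (-deriv f s) =
      h (‖f s - g t‖ ^ 2) * cross (f s - g t) (deriv f s) := fun t s => by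
    rw [norm_sub_rev, cross_neg_right, ← cross_neg_left, neg_sub]
  have hgreen := setIntegral_Icc_curl_eq_boundary hP hQ hab
  simp only [Function.comp_apply, hedge] at hgreen
  rw [← neg_inj, ← integral_neg]
  refine (integral_congr_ae (.of_forall fun x => ?_)).trans (hgreen.trans (by ring))
  simp only [← hedge]
  exact (curl_comp_norm_sq_mul_cross hh (hf.differentiable two_ne_zero x.1).hasDerivAt
    (hg.differentiable two_ne_zero x.2).hasDerivAt (hQ.differentiable one_ne_zero x)
    (hP.differentiable one_ne_zero x)).symm

theorem continuousLinearMap_det_prod (L : ℝ × ℝ →L[ℝ] ℝ × ℝ) :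
    L.det = (L (1, 0)).1 * (L (0, 1)).2 - (L (0, 1)).1 * (L (1, 0)).2 := by
  rw [ContinuousLinearMap.det, ← LinearMap.det_toMatrix (Module.Basis.finTwoProd ℝ),
    Matrix.det_fin_two]
  simp [LinearMap.toMatrix_apply]

theorem setIntegral_Ioi_mul_deriv_comp_sq {χ : ℝ → ℝ} (hχ : ContDiff ℝ 1 χ) {R : ℝ}
    (hR : ∀ r, R ≤ r → χ r = 0) : ∫ r in Ioi (0 : ℝ), r * deriv χ (r ^ 2) = -χ 0 / 2 := by
  have hsupp : HasCompactSupport fun r => χ (r ^ 2) :=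
    HasCompactSupport.intro (isCompact_closedBall 0 (max R 1)) fun r hr => hR _ <| by
      rw [mem_closedBall_zero_iff, Real.norm_eq_abs, not_le, max_lt_iff] at hr
      nlinarith [sq_abs r]
  have hderiv : deriv (fun r => χ (r ^ 2)) = fun r => 2 * (r * deriv χ (r ^ 2)) := by
    ext r
    have := ((hχ.differentiable one_ne_zero _).hasDerivAt.comp r (hasDerivAt_pow 2 r)).deriv
    rw [Function.comp_def] at this
    rw [this]
    push_cast
    ring
  have hsmooth : ContDiff ℝ 1 fun r => χ (r ^ 2) := hχ.comp (contDiff_id.pow 2)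
  have hint := hsupp.integral_Ioi_deriv_eq hsmooth 0
  rw [hderiv, integral_const_mul, zero_pow two_ne_zero] at hint
  linarith

theorem integral_deriv_comp_sq_add_sq {χ : ℝ → ℝ} (hχ : ContDiff ℝ 1 χ) {R : ℝ}
    (hR : ∀ r, R ≤ r → χ r = 0) :
    ∫ y : ℝ × ℝ, deriv χ (y.1 ^ 2 + y.2 ^ 2) = -(π * χ 0) := by
  have hpolar : ∀ p : ℝ × ℝ, p.1 • deriv χ
      ((polarCoord.symm p).1 ^ 2 + (polarCoord.symm p).2 ^ 2) = p.1 * deriv χ (p.1 ^ 2) * 1 := by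
    intro p
    rw [polarCoord_symm_apply, smul_eq_mul, mul_one, mul_pow, mul_pow, ← mul_add,
      cos_sq_add_sin_sq, mul_one]
  rw [← integral_comp_polarCoord_symm]
  simp only [hpolar]
  calc _ = (∫ r in Ioi (0 : ℝ), r * deriv χ (r ^ 2)) * ∫ _ in Ioo (-π) π, (1 : ℝ) :=
        setIntegral_prod_mul _ (fun _ => (1 : ℝ)) _ _
    _ = -(π * χ 0) := by
        rw [setIntegral_Ioi_mul_deriv_comp_sq hχ hR, setIntegral_const, smul_eq_mul,
          Real.volume_real_Ioo_of_le (by linarith [pi_pos])]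
        ring

end Green

section ChordAngle

open MeasureTheory Complex ComplexConjugate

theorem arg_one_sub_exp_mul_I_of_pos {α : ℝ} (h0 : 0 < α) (h2π : α < 2 * π) :
    arg (1 - exp (α * I)) = (α - π) / 2 := by
  have hsin : 0 < Real.sin (α / 2) := Real.sin_pos_of_pos_of_lt_pi (by linarith) (by linarith)
  have hpolar : 1 - exp (α * I) =
      (2 * Real.sin (α / 2) : ℝ) * exp (((α - π) / 2 : ℝ) * I) := by
    have hexp : exp (((α - π) / 2 : ℝ) * I) = exp (α / 2 * I) * -I := by
      rw [← exp_neg_pi_div_two_mul_I, ← Complex.exp_add]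
      push_cast
      ring_nf
    have hsq : exp (α * I) = exp (α / 2 * I) * exp (α / 2 * I) := by
      rw [← Complex.exp_add]
      ring_nf
    have hinv : exp (-(α / 2) * I) * exp (α / 2 * I) = 1 := by
      rw [← Complex.exp_add]
      simp
    rw [hexp, hsq]
    push_cast
    rw [Complex.sin]
    linear_combination
      (exp (-(α / 2) * I) * exp (α / 2 * I) - exp (α / 2 * I) * exp (α / 2 * I)) * I_sq - hinv
  rw [hpolar, arg_real_mul _ (by positivity), arg_exp_mul_I, toIocMod_eq_self]
  constructor <;> linarith

theorem arg_one_sub_exp_mul_I {α : ℝ} (hα : α ≠ 0) (hα' : |α| < 2 * π) :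
    arg (1 - exp (α * I)) = α / 2 - SignType.sign α * (π / 2) := by
  rcases hα.lt_or_gt with hneg | hpos
  · have hconj : 1 - exp (α * I) = conj (1 - exp ((-α : ℝ) * I)) := by
      simp [← exp_conj]
    have harg := arg_one_sub_exp_mul_I_of_pos (neg_pos.2 hneg) ((neg_le_abs α).trans_lt hα')
    rw [hconj, arg_conj, harg, if_neg (by linarith [(neg_le_abs α).trans_lt hα']), sign_neg hneg]
    simp only [SignType.coe_neg_one]
    ring
  · rw [arg_one_sub_exp_mul_I_of_pos hpos ((le_abs_self α).trans_lt hα'), sign_pos hpos]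
    simp only [SignType.coe_one]
    ring

theorem one_sub_mem_slitPlane {z : ℂ} (hz : ‖z‖ ≤ 1) (hz1 : z ≠ 1) : 1 - z ∈ slitPlane := by
  refine .inl ?_
  rw [sub_re, one_re, sub_pos]
  refine ((re_le_norm z).trans hz).lt_of_ne fun hre => hz1 ?_
  have him : z.im ^ 2 ≤ 0 := by
    have := sq_norm_sub_sq_re z
    nlinarith [norm_nonneg z]
  exact Complex.ext hre (by simpa using le_antisymm him (sq_nonneg _))

theorem integral_cross_div_norm_sq {γ : ℝ → ℂ} (hγ : ContDiff ℝ 1 γ) {v : ℂ} (hv : ‖v‖ = 1)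
    {a b : ℝ} (hball : ∀ t ∈ uIcc a b, ‖γ t‖ ≤ 1) (hne : ∀ t ∈ uIcc a b, γ t ≠ v) :
    ∫ t in a..b, (‖γ t - v‖ ^ 2)⁻¹ * cross (γ t - v) (deriv γ t) =
      arg (1 - γ b * conj v) - arg (1 - γ a * conj v) := by
  have hvv : v * conj v = 1 := by simp [mul_conj, normSq_eq_norm_sq, hv]
  have hslit : ∀ t ∈ uIcc a b, 1 - γ t * conj v ∈ slitPlane := fun t ht =>
    one_sub_mem_slitPlane (by simpa [hv] using hball t ht) fun h => hne t ht <| by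
      linear_combination v * h - γ t * hvv
  have hderiv : ∀ t ∈ uIcc a b, HasDerivAt (fun t => (log (1 - γ t * conj v)).im)
      ((‖γ t - v‖ ^ 2)⁻¹ * cross (γ t - v) (deriv γ t)) t := by
    intro t ht
    have hlog := imCLM.hasFDerivAt.comp_hasDerivAt t ((((hγ.differentiable one_ne_zero
      t).hasDerivAt.mul_const (conj v)).const_sub 1).clog_real (hslit t ht))
    refine hlog.congr_deriv ?_
    have hquot : -(deriv γ t * conj v) / (1 - γ t * conj v) =
        conj (γ t - v) * deriv γ t * ((‖γ t - v‖ ^ 2)⁻¹ : ℝ) := by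
      rw [Complex.sq_norm, div_eq_iff (slitPlane_ne_zero (hslit t ht)),
        mul_right_comm _ (deriv γ t), ← inv_def,
        ← mul_right_inj' (sub_ne_zero.2 (hne t ht)), ← mul_assoc, ← mul_assoc,
        mul_inv_cancel₀ (sub_ne_zero.2 (hne t ht))]
      linear_combination deriv γ t * hvv
    rw [hquot, imCLM_apply, im_mul_ofReal, ← cross_eq_im, mul_comm]
  rw [intervalIntegral.integral_eq_sub_of_hasDerivAt hderiv]
  · simp only [log_im]
  · have hγ' : Continuous fun t => cross (γ t - v) (deriv γ t) := by
      have := hγ.continuous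
      have := hγ.continuous_deriv le_rfl
      unfold cross
      fun_prop
    exact ((((hγ.continuous.sub continuous_const).norm.pow 2).continuousOn.inv₀ fun t ht =>
      pow_ne_zero 2 (norm_ne_zero_iff.2 (sub_ne_zero.2 (hne t ht)))).mul
      hγ'.continuousOn).intervalIntegrable

end ChordAngle

section Crossings

open MeasureTheory Filter Topology Complex

/-- A `C²` curve that on `[0, 1]` crosses the open unit disk from the boundary point at angle `α`
to the boundary point at angle `β`. The angles are normalised to `[0, 2π)` so that their order is
the order of the endpoints along the circle cut open at `1`. -/
structure IsChordArc (f : ℝ → ℂ) (α β : ℝ) : Prop where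
  contDiff : ContDiff ℝ 2 f
  source : f 0 = exp (α * I)
  target : f 1 = exp (β * I)
  source_mem : α ∈ Ico 0 (2 * π)
  target_mem : β ∈ Ico 0 (2 * π)
  norm_lt_one : ∀ t ∈ Ioo (0 : ℝ) 1, ‖f t‖ < 1

theorem injOn_exp_mul_I : InjOn (fun α : ℝ => exp (α * I)) (Ico 0 (2 * π)) := by
  intro α hα β hβ h
  have hmod := Circle.exp_inj.1 (Circle.ext (by simpa only [Circle.coe_exp] using h) :
    Circle.exp α = Circle.exp β)
  rwa [← toIcoMod_inj two_pi_pos (c := 0), (toIcoMod_eq_self _).2 (by simpa using hα),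
    (toIcoMod_eq_self _).2 (by simpa using hβ)] at hmod

theorem arg_one_sub_exp_mul_conj_exp {α δ : ℝ} (hα : α ∈ Ico 0 (2 * π)) (hδ : δ ∈ Ico 0 (2 * π))
    (hne : α ≠ δ) : arg (1 - exp (α * I) * (starRingEnd ℂ) (exp (δ * I))) =
      (α - δ) / 2 - SignType.sign (α - δ) * (π / 2) := by
  rw [← arg_one_sub_exp_mul_I (sub_ne_zero.2 hne) (abs_sub_lt_of_nonneg_of_lt hα.1 hα.2 hδ.1 hδ.2),
    ← exp_conj, ← Complex.exp_add]
  congr 3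
  simp
  ring

theorem eventually_le_norm_sub {γ : ℝ → ℂ} {s : Set ℝ} (hs : IsCompact s)
    (hγ : ContinuousOn γ s) {v : ℂ} (hne : ∀ t ∈ s, γ t ≠ v) :
    ∀ᶠ ε in 𝓝[>] (0 : ℝ), ∀ t ∈ s, ε ≤ ‖γ t - v‖ := by
  obtain ⟨m, hm, hmγ⟩ := hs.exists_forall_le' (hγ.sub continuousOn_const).norm
    fun t ht => norm_pos_iff.2 (sub_ne_zero.2 (hne t ht))
  filter_upwards [Ioo_mem_nhdsGT hm] with ε hε t ht using hε.2.le.trans (hmγ t ht)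

theorem exists_contDiff_eq_inv {c : ℝ} (hc : 0 < c) :
    ∃ h : ℝ → ℝ, ContDiff ℝ 1 h ∧ ∀ r, c ≤ r → h r = r⁻¹ := by
  refine ⟨fun r => smoothTransition (2 * r / c - 1) * r⁻¹, ?_, fun r hr => ?_⟩
  · refine contDiff_iff_contDiffAt.2 fun r => ?_
    rcases eq_or_ne r 0 with rfl | hr
    · refine (contDiffAt_const (c := 0)).congr_of_eventuallyEq ?_
      filter_upwards [eventually_lt_nhds (half_pos hc)] with r hr
      rw [smoothTransition.zero_of_nonpos, zero_mul]
      rw [sub_nonpos, div_le_one hc]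
      linarith
    · exact (smoothTransition.contDiffAt.comp r (by fun_prop)).mul (contDiffAt_inv ℝ hr)
  · beta_reduce
    rw [smoothTransition.one_of_one_le, one_mul]
    rw [le_sub_iff_add_le, le_div_iff₀ hc]
    linarith

theorem contDiff_sub_curves {f g : ℝ → ℂ} {k : WithTop ℕ∞} (hf : ContDiff ℝ k f)
    (hg : ContDiff ℝ k g) : ContDiff ℝ k fun x : ℝ × ℝ => equivRealProdCLM (g x.2 - f x.1) :=
  equivRealProdCLM.contDiff.comp ((hg.comp contDiff_snd).sub (hf.comp contDiff_fst))

theorem det_fderiv_sub_curves {f g : ℝ → ℂ} (hf : ContDiff ℝ 1 f) (hg : ContDiff ℝ 1 g)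
    (x : ℝ × ℝ) : (fderiv ℝ (fun x : ℝ × ℝ => equivRealProdCLM (g x.2 - f x.1)) x).det =
      -cross (deriv f x.1) (deriv g x.2) := by
  obtain ⟨s, t⟩ := x
  have hdiff := (contDiff_sub_curves hf hg).differentiable one_ne_zero (s, t)
  rw [continuousLinearMap_det_prod,
    fderiv_apply_one_zero hdiff (equivRealProdCLM.hasFDerivAt.comp_hasDerivAt s
      ((hf.differentiable one_ne_zero s).hasDerivAt.const_sub (g t))),
    fderiv_apply_zero_one hdiff (equivRealProdCLM.hasFDerivAt.comp_hasDerivAt t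
      ((hg.differentiable one_ne_zero t).hasDerivAt.sub_const (f s)))]
  simp [cross]
  ring

theorem integral_two_mul_deriv_mul_comp_sq_add_sq {h : ℝ → ℝ} (hh : ContDiff ℝ 1 h) {c : ℝ}
    (hc : 0 < c) (hinv : ∀ r, c ≤ r → h r = r⁻¹) :
    ∫ y : ℝ × ℝ, 2 * deriv (fun r => r * h r) (y.1 ^ 2 + y.2 ^ 2) = 2 * π := by
  have hderiv : deriv (fun r => r * h r) = deriv fun r => r * h r - 1 := by
    ext r
    rw [deriv_sub_const]
  have hcontDiff : ContDiff ℝ 1 fun r => r * h r - 1 := (contDiff_id.mul hh).sub contDiff_const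
  rw [integral_const_mul, hderiv, integral_deriv_comp_sq_add_sq hcontDiff fun r hr => by
    rw [hinv r hr, mul_inv_cancel₀ (hc.trans_le hr).ne', sub_self]]
  simp

theorem deriv_mul_eq_zero_of_eq_inv {h : ℝ → ℝ} {c r : ℝ} (hc : 0 < c)
    (hinv : ∀ r, c ≤ r → h r = r⁻¹) (hr : c < r) : deriv (fun r => r * h r) r = 0 := by
  have hone : (fun r => r * h r) =ᶠ[𝓝 r] fun _ => 1 := by
    filter_upwards [eventually_gt_nhds hr] with x hx
    rw [hinv x hx.le, mul_inv_cancel₀ (hc.trans hx).ne']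
  rw [hone.deriv_eq, deriv_const]

theorem half_sq_lt_of_le_norm {ε : ℝ} (hε : 0 < ε) {y : ℝ × ℝ} (hy : ε ≤ ‖y‖) :
    ε ^ 2 / 2 < y.1 ^ 2 + y.2 ^ 2 := by
  have hε2 := pow_pos hε 2
  rw [Prod.norm_def, le_max_iff, norm_eq_abs, norm_eq_abs] at hy
  rcases hy with hy | hy <;>
    linarith [sq_abs y.1 ▸ sq_nonneg y.1, sq_nonneg y.2, sq_le_sq' (by linarith) hy, sq_abs y.1,
      sq_abs y.2]

namespace IsChordArc

variable {f g : ℝ → ℂ} {α β γ δ : ℝ}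

theorem norm_le_one (hf : IsChordArc f α β) {t : ℝ} (ht : t ∈ Icc (0 : ℝ) 1) : ‖f t‖ ≤ 1 := by
  rcases eq_endpoints_or_mem_Ioo_of_mem_Icc ht with rfl | rfl | ht
  · rw [hf.source, norm_exp_ofReal_mul_I]
  · rw [hf.target, norm_exp_ofReal_mul_I]
  · exact (hf.norm_lt_one t ht).le

theorem ne_exp (hf : IsChordArc f α β) (hδ : δ ∈ Ico 0 (2 * π)) (hα : α ≠ δ) (hβ : β ≠ δ) {t : ℝ}
    (ht : t ∈ Icc (0 : ℝ) 1) : f t ≠ exp (δ * I) := by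
  rcases eq_endpoints_or_mem_Ioo_of_mem_Icc ht with rfl | rfl | ht
  · exact hf.source ▸ injOn_exp_mul_I.ne hf.source_mem hδ hα
  · exact hf.target ▸ injOn_exp_mul_I.ne hf.target_mem hδ hβ
  · intro h
    exact (hf.norm_lt_one t ht).ne (by rw [h, norm_exp_ofReal_mul_I])

theorem mem_Ioo_of_eq (hf : IsChordArc f α β) (hg : IsChordArc g γ δ)
    (hαγ : α ≠ γ) (hαδ : α ≠ δ) (hβγ : β ≠ γ) (hβδ : β ≠ δ) {s t : ℝ}
    (hs : s ∈ Icc (0 : ℝ) 1) (ht : t ∈ Icc (0 : ℝ) 1) (h : f s = g t) :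
    s ∈ Ioo (0 : ℝ) 1 ∧ t ∈ Ioo (0 : ℝ) 1 := by
  constructor
  · rcases eq_endpoints_or_mem_Ioo_of_mem_Icc hs with rfl | rfl | hs
    · exact absurd (h.symm.trans hf.source) (hg.ne_exp hf.source_mem hαγ.symm hαδ.symm ht)
    · exact absurd (h.symm.trans hf.target) (hg.ne_exp hf.target_mem hβγ.symm hβδ.symm ht)
    · exact hs
  · rcases eq_endpoints_or_mem_Ioo_of_mem_Icc ht with rfl | rfl | ht
    · exact absurd (h.trans hg.source) (hf.ne_exp hg.source_mem hαγ hβγ hs)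
    · exact absurd (h.trans hg.target) (hf.ne_exp hg.target_mem hαδ hβδ hs)
    · exact ht

theorem eventually_integral_edge (hf : IsChordArc f α β) (hδ : δ ∈ Ico 0 (2 * π)) (hα : α ≠ δ)
    (hβ : β ≠ δ) : ∀ᶠ ε in 𝓝[>] (0 : ℝ), ∀ h : ℝ → ℝ, (∀ r, ε ^ 2 / 2 ≤ r → h r = r⁻¹) →
      ∫ t in (0 : ℝ)..1, h (‖f t - exp (δ * I)‖ ^ 2) * cross (f t - exp (δ * I)) (deriv f t) =
        (β - α) / 2 - (SignType.sign (β - δ) - SignType.sign (α - δ)) * (π / 2) := by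
  filter_upwards [eventually_le_norm_sub isCompact_Icc hf.contDiff.continuous.continuousOn
    fun t ht => hf.ne_exp hδ hα hβ ht, self_mem_nhdsWithin] with ε hε hε0 h hh
  rw [← uIcc_of_le zero_le_one] at hε
  calc _ = ∫ t in (0 : ℝ)..1, (‖f t - exp (δ * I)‖ ^ 2)⁻¹ *
        cross (f t - exp (δ * I)) (deriv f t) := by
        refine intervalIntegral.integral_congr fun t ht => ?_
        rw [hh]
        nlinarith [hε t ht, mem_Ioi.1 hε0]
    _ = _ := by
      rw [integral_cross_div_norm_sq (hf.contDiff.of_le one_le_two) (norm_exp_ofReal_mul_I δ)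
          (fun t ht => hf.norm_le_one (uIcc_of_le (zero_le_one' ℝ) ▸ ht))
          fun t ht => hf.ne_exp hδ hα hβ (uIcc_of_le (zero_le_one' ℝ) ▸ ht),
        hf.source, hf.target, arg_one_sub_exp_mul_conj_exp hf.source_mem hδ hα,
        arg_one_sub_exp_mul_conj_exp hf.target_mem hδ hβ]
      ring

theorem eventually_setIntegral_bump (hf : IsChordArc f α β) (hg : IsChordArc g γ δ)
    (hαγ : α ≠ γ) (hαδ : α ≠ δ) (hβγ : β ≠ γ) (hβδ : β ≠ δ) :
    ∀ᶠ ε in 𝓝[>] (0 : ℝ), ∀ h : ℝ → ℝ, ContDiff ℝ 1 h → (∀ r, ε ^ 2 / 2 ≤ r → h r = r⁻¹) →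
      ∫ x in Icc (0 : ℝ × ℝ) 1, 2 * deriv (fun r => r * h r) (‖g x.2 - f x.1‖ ^ 2) *
          cross (deriv f x.1) (deriv g x.2) =
        π * (SignType.sign (δ - β) - SignType.sign (γ - β) - SignType.sign (δ - α) +
          SignType.sign (γ - α)) := by
  filter_upwards [hg.eventually_integral_edge hf.source_mem hαγ.symm hαδ.symm,
    hg.eventually_integral_edge hf.target_mem hβγ.symm hβδ.symm,
    hf.eventually_integral_edge hg.source_mem hαγ hβγ,
    hf.eventually_integral_edge hg.target_mem hαδ hβδ] with ε hgα hgβ hfγ hfδ h hh hinv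
  have hgreen := setIntegral_deriv_mul_cross_deriv hf.contDiff hg.contDiff hh
    (zero_le_one' (ℝ × ℝ))
  simp only [Prod.fst_zero, Prod.snd_zero, Prod.fst_one, Prod.snd_one, hf.source, hf.target,
    hg.source, hg.target, hgα h hinv, hgβ h hinv, hfγ h hinv, hfδ h hinv] at hgreen
  rw [hgreen]
  have hsign : ∀ x y : ℝ, (SignType.sign (x - y) : ℝ) = -SignType.sign (y - x) := fun x y => by
    rw [← neg_sub, Left.sign_neg, SignType.coe_neg]
  rw [hsign β δ, hsign α δ, hsign β γ, hsign α γ]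
  ring

theorem eventually_setIntegral_bump_eq_sum (hf : IsChordArc f α β) (hg : IsChordArc g γ δ)
    (hαγ : α ≠ γ) (hαδ : α ≠ δ) (hβγ : β ≠ γ) (hβδ : β ≠ δ) {Z : Finset (ℝ × ℝ)}
    (hZ : ∀ x, x ∈ Z ↔ x ∈ Ioo (0 : ℝ) 1 ×ˢ Ioo (0 : ℝ) 1 ∧ f x.1 = g x.2)
    (htransverse : ∀ x ∈ Z, cross (deriv f x.1) (deriv g x.2) ≠ 0) :
    ∀ᶠ ε in 𝓝[>] (0 : ℝ), ∀ h : ℝ → ℝ, ContDiff ℝ 1 h → (∀ r, ε ^ 2 / 2 ≤ r → h r = r⁻¹) →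
      ∫ x in Icc (0 : ℝ × ℝ) 1, 2 * deriv (fun r => r * h r) (‖g x.2 - f x.1‖ ^ 2) *
          cross (deriv f x.1) (deriv g x.2) =
        2 * π * ∑ x ∈ Z, (SignType.sign (cross (deriv f x.1) (deriv g x.2)) : ℝ) := by
  have hf1 := hf.contDiff.of_le one_le_two
  have hg1 := hg.contDiff.of_le one_le_two
  have hIcc : Icc (0 : ℝ × ℝ) 1 = Icc 0 1 ×ˢ Icc 0 1 := (Icc_prod_Icc _ _ _ _).symm
  have hdegree := eventually_setIntegral_comp_mul_det_fderiv volume (contDiff_sub_curves hf1 hg1)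
    (isCompact_Icc : IsCompact (Icc (0 : ℝ × ℝ) 1)) (Z := Z)
    (fun x hx h0 => by
      rw [EmbeddingLike.map_eq_zero_iff, sub_eq_zero] at h0
      rw [hIcc] at hx
      exact (hZ x).2 ⟨hf.mem_Ioo_of_eq hg hαγ hαδ hβγ hβδ hx.1 hx.2 h0.symm, h0.symm⟩)
    (fun x hx => ⟨by rw [((hZ x).1 hx).2, sub_self, map_zero],
      hIcc ▸ mem_of_superset ((isOpen_Ioo.prod isOpen_Ioo).mem_nhds ((hZ x).1 hx).1)
        (prod_mono Ioo_subset_Icc_self Ioo_subset_Icc_self),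
      det_fderiv_sub_curves hf1 hg1 x ▸ neg_ne_zero.2 (htransverse x hx)⟩)
  filter_upwards [hdegree, self_mem_nhdsWithin] with ε hdegree hε h hh hinv
  have hε2 : 0 < ε ^ 2 / 2 := half_pos (pow_pos hε 2)
  have hbump : Continuous fun y : ℝ × ℝ =>
      2 * deriv (fun r => r * h r) (y.1 ^ 2 + y.2 ^ 2) :=
    continuous_const.mul (((contDiff_id.mul hh).continuous_deriv le_rfl).comp (by fun_prop))
  have hint := hdegree _ hbump fun y hy => by
    rw [deriv_mul_eq_zero_of_eq_inv hε2 hinv (half_sq_lt_of_le_norm hε hy), mul_zero]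
  have hnorm : ∀ z : ℂ, (equivRealProdCLM z).1 ^ 2 + (equivRealProdCLM z).2 ^ 2 = ‖z‖ ^ 2 :=
    fun z => by rw [Complex.sq_norm, normSq_apply]; simp [sq]
  simp only [integral_two_mul_deriv_mul_comp_sq_add_sq hh hε2 hinv, hnorm, mul_neg,
    det_fderiv_sub_curves hf1 hg1, integral_neg, Left.sign_neg, SignType.coe_neg,
    Finset.sum_neg_distrib, neg_mul, neg_inj] at hint
  rw [hint, mul_comm]

theorem two_mul_sum_sign_cross (hf : IsChordArc f α β) (hg : IsChordArc g γ δ)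
    (hαγ : α ≠ γ) (hαδ : α ≠ δ) (hβγ : β ≠ γ) (hβδ : β ≠ δ) {Z : Finset (ℝ × ℝ)}
    (hZ : ∀ x, x ∈ Z ↔ x ∈ Ioo (0 : ℝ) 1 ×ˢ Ioo (0 : ℝ) 1 ∧ f x.1 = g x.2)
    (htransverse : ∀ x ∈ Z, cross (deriv f x.1) (deriv g x.2) ≠ 0) :
    2 * ∑ x ∈ Z, (SignType.sign (cross (deriv f x.1) (deriv g x.2)) : ℝ) =
      SignType.sign (δ - β) - SignType.sign (γ - β) - SignType.sign (δ - α) +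
        SignType.sign (γ - α) := by
  obtain ⟨ε, ⟨hedge, hsum⟩, hε⟩ := ((hf.eventually_setIntegral_bump hg hαγ hαδ hβγ hβδ).and
    (hf.eventually_setIntegral_bump_eq_sum hg hαγ hαδ hβγ hβδ hZ htransverse)).and
    self_mem_nhdsWithin |>.exists
  obtain ⟨h, hh, hinv⟩ := exists_contDiff_eq_inv (half_pos (pow_pos (mem_Ioi.1 hε) 2))
  have := (hsum h hh hinv).symm.trans (hedge h hh hinv)
  exact mul_left_cancel₀ pi_ne_zero (by linarith)

end IsChordArc

end Crossings

theorem two_mul_ite_lt_eq_sign {a b c d : ℝ} (hab : a < b) (had : a ≠ d)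
    (hbc : b ≠ c) (hcd : c ≠ d) (hside : a < c ↔ b < d) :
    2 * ((if a < b ∧ b < c ∧ c < d then 1 else 0) + (if c < d ∧ d < a ∧ a < b then 1 else 0) : ℝ) =
      SignType.sign (d - c) - SignType.sign (b - c) - SignType.sign (d - a) +
        SignType.sign (b - a) := by
  have hpos : ∀ x y : ℝ, x < y → (SignType.sign (y - x) : ℝ) = 1 := fun x y h => by
    simp [sign_pos (sub_pos.2 h)]
  have hneg : ∀ x y : ℝ, y < x → (SignType.sign (y - x) : ℝ) = -1 := fun x y h => by
    simp [sign_neg (sub_neg.2 h)]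
  rw [hpos a b hab]
  rcases hcd.lt_or_gt with hcd | hcd <;> rcases hbc.lt_or_gt with hbc | hbc <;>
    rcases had.lt_or_gt with had | had <;>
    simp only [hpos, hneg, hcd, hbc, had, hab, hcd.not_gt, hbc.not_gt, had.not_gt, and_true,
      and_false, if_true, if_false] <;>
    first | (exfalso; grind) | norm_num

/-- The sign of `u × v`: it is `1` if `v` points to the left of `u`, and `-1` if `v` points to the
right of `u`. -/
noncomputable def crossSign (u v : ℂ) : ℝ := SignType.sign (cross u v)

theorem crossSign_neg_swap (u v : ℂ) : crossSign v u = -crossSign u v := by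
  rw [crossSign, cross_swap, Left.sign_neg, SignType.coe_neg, crossSign]

theorem crossSign_self (u : ℂ) : crossSign u u = 0 := by
  simpa [eq_neg_iff_add_eq_zero] using crossSign_neg_swap u u

theorem cross_ne_zero_of_linearIndependent {u v : ℂ} (h : LinearIndependent ℝ ![u, v]) :
    cross u v ≠ 0 := by
  intro hcross
  rw [LinearIndependent.pair_iff] at h
  have hre := h v.re (-u.re) (Complex.ext (by simp; ring) (by simp [cross] at hcross ⊢; linarith))
  have him := h v.im (-u.im) (Complex.ext (by simp [cross] at hcross ⊢; linarith) (by simp; ring))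
  exact one_ne_zero (h 1 0 (Complex.ext (by simpa using hre.2) (by simpa using him.2))).1

theorem abs_crossSign_le_one (u v : ℂ) : |crossSign u v| ≤ 1 := by
  rcases SignType.trichotomy (SignType.sign (cross u v)) with h | h | h <;> simp [crossSign, h]

theorem crossSign_eq_of_smul_add_eq_zero {u v w : ℂ} {a b c : ℝ} (ha : 0 < a) (hc : 0 < c)
    (h : a • u + b • v + c • w = 0) : crossSign v w = crossSign u v := by
  have hre := congrArg Complex.re h
  have him := congrArg Complex.im h
  simp only [Complex.add_re, Complex.add_im, Complex.smul_re, Complex.smul_im, smul_eq_mul,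
    Complex.zero_re, Complex.zero_im] at hre him
  have hcross : c * cross v w = a * cross u v := by
    unfold cross
    linear_combination v.re * him - v.im * hre
  rw [crossSign, ← one_mul (SignType.sign (cross v w)), ← sign_pos hc, ← sign_mul, hcross,
    sign_mul, sign_pos ha, one_mul, crossSign]

theorem abs_cyclic_sum_strictOrder_le_one {Q : Type*} (r : Q → Q → Prop) [IsStrictOrder Q r]
    [DecidableRel r] (x y z : Q) :
    |((if r x y then 1 else 0) - (if r y x then 1 else 0) + (if r y z then 1 else 0) -
      (if r z y then 1 else 0) + (if r z x then 1 else 0) - (if r x z then 1 else 0) : ℝ)| ≤ 1 := by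
  have hasymm : ∀ a b, r a b → ¬ r b a := fun a b => asymm
  have htrans : ∀ a b c, r a b → r b c → r a c := fun a b c => _root_.trans
  split_ifs <;> first | (exfalso; grind) | norm_num

/-- The identification of `ℂ` with the Euclidean plane. -/
noncomputable def complexEquivPlane : ℂ ≃ₗᵢ[ℝ] Plane := Complex.orthonormalBasisOneI.repr

/-- The strand containing a passage. -/
def strand {na nl : ℕ} : (Fin na × ℝ) ⊕ (Fin nl × ℝ) → Fin na ⊕ Fin nl := Sum.map Prod.fst Prod.fst

/-- The parameter of a passage along its strand. -/
def time {na nl : ℕ} : (Fin na × ℝ) ⊕ (Fin nl × ℝ) → ℝ := Sum.elim Prod.snd Prod.snd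

theorem strand_eq_inl_iff {na nl : ℕ} {q : (Fin na × ℝ) ⊕ (Fin nl × ℝ)} {i : Fin na} :
    strand q = .inl i ↔ q = .inl (i, time q) := by
  rcases q with q | q <;> simp [strand, time, Prod.ext_iff]

theorem complexEquivPlane_exp (θ : ℝ) :
    complexEquivPlane (Complex.exp (θ * Complex.I)) = unitPt θ := by
  ext k
  fin_cases k <;> simp [complexEquivPlane, unitPt, Complex.exp_ofReal_mul_I_re,
    Complex.exp_ofReal_mul_I_im]

namespace TripleDiagram

variable {na nl : ℕ} (D : TripleDiagram na nl)

/-- The sign with which the branch of the second passage crosses that of the first. -/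
noncomputable def passageSign (q q' : (Fin na × ℝ) ⊕ (Fin nl × ℝ)) : ℝ :=
  crossSign (complexEquivPlane.symm (D.tangent q)) (complexEquivPlane.symm (D.tangent q'))

/-- The set of triple points as a finset. -/
noncomputable def triplePoints : Finset Plane := D.multiple_finite.toFinset

variable {D} in
theorem mem_triplePoints {p : Plane} : p ∈ D.triplePoints ↔ D.IsMultiplePoint p :=
  D.multiple_finite.mem_toFinset

theorem card_triplePoints : D.triplePoints.card = D.tripleCount :=
  (Set.ncard_eq_toFinset_card _ D.multiple_finite).symm

open Classical in
/-- The passages through a triple point as a finset. -/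
noncomputable def branches (p : Plane) : Finset ((Fin na × ℝ) ⊕ (Fin nl × ℝ)) :=
  if h : (D.passages p).Finite then h.toFinset else ∅

variable {D} in
theorem coe_branches {p : Plane} (hp : p ∈ D.triplePoints) : D.branches p = D.passages p := by
  have hfin : (D.passages p).Finite := Set.finite_of_ncard_ne_zero <| by
    rw [D.triple p (mem_triplePoints.1 hp)]
    norm_num
  simp [branches, hfin]

variable {D} in
theorem mem_branches {p : Plane} (hp : p ∈ D.triplePoints) {q : (Fin na × ℝ) ⊕ (Fin nl × ℝ)} :
    q ∈ D.branches p ↔ q ∈ D.passages p := by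
  rw [← Finset.mem_coe, coe_branches hp]

open Classical in
theorem sum_passageSign_le_one {p : Plane} (hp : p ∈ D.triplePoints)
    (r : Fin na ⊕ Fin nl → Fin na ⊕ Fin nl → Prop) [IsStrictOrder _ r] :
    ∑ x ∈ D.branches p ×ˢ D.branches p,
      (if r (strand x.1) (strand x.2) then D.passageSign x.1 x.2 else 0) ≤ 1 := by
  obtain ⟨q₁, q₂, q₃, hq, a, b, c, ha, hb, hc, hsum⟩ := D.alternating p (mem_triplePoints.1 hp)
  have hbr : D.branches p = {q₁, q₂, q₃} := by
    rw [← Finset.coe_inj, coe_branches hp, hq]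
    simp
  have hcard : ({q₁, q₂, q₃} : Finset ((Fin na × ℝ) ⊕ (Fin nl × ℝ))).card = 3 := by
    rw [← hbr, ← Set.ncard_coe_finset, coe_branches hp, D.triple p (mem_triplePoints.1 hp)]
  obtain ⟨h12, h13, h23⟩ := Finset.card_triple_eq_three_iff.1 hcard
  have hsum' := congrArg complexEquivPlane.symm hsum
  simp only [map_add, map_smul, map_zero] at hsum'
  have hs23 : D.passageSign q₂ q₃ = D.passageSign q₁ q₂ :=
    crossSign_eq_of_smul_add_eq_zero ha hc hsum'
  have hs31 : D.passageSign q₃ q₁ = D.passageSign q₂ q₃ :=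
    crossSign_eq_of_smul_add_eq_zero hb ha (by rw [← hsum']; abel)
  have hself : ∀ q, D.passageSign q q = 0 := fun q => crossSign_self _
  have hswap : ∀ q q', D.passageSign q' q = -D.passageSign q q' := fun q q' =>
    crossSign_neg_swap _ _
  have hcyclic := (le_abs_self _).trans <| (abs_mul (D.passageSign q₁ q₂) _).trans_le <|
    mul_le_one₀ (abs_crossSign_le_one _ _) (abs_nonneg _)
      (abs_cyclic_sum_strictOrder_le_one r (strand q₁) (strand q₂) (strand q₃))
  refine le_of_eq_of_le ?_ hcyclic
  simp only [hbr, Finset.sum_product, Finset.sum_insert, Finset.mem_insert, Finset.mem_singleton,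
    h12, h13, h23, or_self, not_false_eq_true, Finset.sum_singleton, hself, ite_self,
    hswap q₁ q₂, hswap q₂ q₃, hswap q₃ q₁, hs31, hs23]
  simp only [← mul_boole _ (D.passageSign q₁ q₂), ← mul_boole _ (-D.passageSign q₁ q₂)]
  ring

/-- The pairs of passages through a common triple point, indexed by that point. -/
noncomputable def coincidences :
    Finset (Σ _ : Plane, ((Fin na × ℝ) ⊕ (Fin nl × ℝ)) × ((Fin na × ℝ) ⊕ (Fin nl × ℝ))) :=
  D.triplePoints.sigma fun p => D.branches p ×ˢ D.branches p

variable {D} in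
theorem mem_coincidences
    {x : Σ _ : Plane, ((Fin na × ℝ) ⊕ (Fin nl × ℝ)) × ((Fin na × ℝ) ⊕ (Fin nl × ℝ))} :
    x ∈ D.coincidences ↔ D.IsMultiplePoint x.1 ∧ x.2.1 ∈ D.passages x.1 ∧
      x.2.2 ∈ D.passages x.1 := by
  rw [coincidences, Finset.mem_sigma, ← mem_triplePoints, Finset.mem_product]
  exact and_congr_right fun hp => by rw [mem_branches hp, mem_branches hp]

/-- The algebraic intersection number of two strands. -/
noncomputable def crossingNumber (a b : Fin na ⊕ Fin nl) : ℝ :=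
  ∑ x ∈ D.coincidences with strand x.2.1 = a ∧ strand x.2.2 = b, D.passageSign x.2.1 x.2.2

open Classical in
theorem sum_crossingNumber_le_tripleCount (r : Fin na ⊕ Fin nl → Fin na ⊕ Fin nl → Prop)
    [IsStrictOrder _ r] :
    ∑ a, ∑ b, (if r a b then D.crossingNumber a b else 0) ≤ D.tripleCount := by
  calc ∑ a, ∑ b, (if r a b then D.crossingNumber a b else 0)
      = ∑ ab : (Fin na ⊕ Fin nl) × (Fin na ⊕ Fin nl), ∑ x ∈ D.coincidences with
          (strand x.2.1, strand x.2.2) = ab,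
          if r (strand x.2.1) (strand x.2.2) then D.passageSign x.2.1 x.2.2 else 0 := by
        rw [← Fintype.sum_prod_type']
        refine Finset.sum_congr rfl fun ab _ => ?_
        have hr : ∀ x ∈ D.coincidences.filter fun x => (strand x.2.1, strand x.2.2) = ab,
            (if r (strand x.2.1) (strand x.2.2) then D.passageSign x.2.1 x.2.2 else 0) =
              if r ab.1 ab.2 then D.passageSign x.2.1 x.2.2 else 0 := fun x hx => by
          rw [← (Finset.mem_filter.1 hx).2]
        rw [Finset.sum_congr rfl hr]
        split_ifs <;> simp [crossingNumber, Prod.ext_iff]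
    _ = ∑ p ∈ D.triplePoints, ∑ x ∈ D.branches p ×ˢ D.branches p,
          if r (strand x.1) (strand x.2) then D.passageSign x.1 x.2 else 0 := by
        rw [Finset.sum_fiberwise, coincidences, Finset.sum_sigma]
    _ ≤ ∑ _p ∈ D.triplePoints, 1 := Finset.sum_le_sum fun p hp => D.sum_passageSign_le_one hp r
    _ = D.tripleCount := by simp [card_triplePoints]

theorem isChordArc_arc {i : Fin na} {α β : ℝ} (hα : α ∈ Ico 0 (2 * π)) (hβ : β ∈ Ico 0 (2 * π))
    (hsource : D.arc i 0 = unitPt α) (htarget : D.arc i 1 = unitPt β) :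
    IsChordArc (fun t => complexEquivPlane.symm (D.arc i t)) α β where
  contDiff := complexEquivPlane.symm.contDiff.comp ((D.arc_smooth i).of_le (by norm_cast))
  source := by rw [hsource, ← complexEquivPlane_exp, LinearIsometryEquiv.symm_apply_apply]
  target := by rw [htarget, ← complexEquivPlane_exp, LinearIsometryEquiv.symm_apply_apply]
  source_mem := hα
  target_mem := hβ
  norm_lt_one t ht := by
    rw [LinearIsometryEquiv.norm_map]
    exact D.arc_interior i t ht

theorem eq_of_mem_passages {p p' : Plane} {q : (Fin na × ℝ) ⊕ (Fin nl × ℝ)}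
    (hq : q ∈ D.passages p) (hq' : q ∈ D.passages p') : p = p' := by
  rcases q with q | q <;> exact hq.2.symm.trans hq'.2

theorem mk_mem_coincidences {p : Plane} {q q' : (Fin na × ℝ) ⊕ (Fin nl × ℝ)}
    (hq : q ∈ D.passages p) (hq' : q' ∈ D.passages p) (hne : q ≠ q') :
    ⟨p, q, q'⟩ ∈ D.coincidences :=
  mem_coincidences.2 ⟨fun h => hne (h hq hq'), hq, hq'⟩

theorem exists_mem_coincidences_iff {i j : Fin na} (hij : i ≠ j) {s t : ℝ} :
    (∃ p, ⟨p, .inl (i, s), .inl (j, t)⟩ ∈ D.coincidences) ↔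
      (s, t) ∈ Ioo (0 : ℝ) 1 ×ˢ Ioo (0 : ℝ) 1 ∧ D.arc i s = D.arc j t := by
  constructor
  · rintro ⟨p, h⟩
    obtain ⟨-, ⟨hs, hi⟩, ht, hj⟩ := mem_coincidences.1 h
    exact ⟨⟨hs, ht⟩, hi.trans hj.symm⟩
  · rintro ⟨⟨hs, ht⟩, h⟩
    exact ⟨_, D.mk_mem_coincidences ⟨hs, rfl⟩ ⟨ht, h.symm⟩ (by simp [hij])⟩

theorem cross_ne_zero_of_mem_coincidences
    {x : Σ _ : Plane, ((Fin na × ℝ) ⊕ (Fin nl × ℝ)) × ((Fin na × ℝ) ⊕ (Fin nl × ℝ))}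
    (hx : x ∈ D.coincidences) (hne : x.2.1 ≠ x.2.2) :
    cross (complexEquivPlane.symm (D.tangent x.2.1))
      (complexEquivPlane.symm (D.tangent x.2.2)) ≠ 0 := by
  obtain ⟨hp, h1, h2⟩ := mem_coincidences.1 hx
  have hli := LinearIndependent.pair_iff.1 (D.branches_transverse _ hp _ h1 _ h2 hne)
  refine cross_ne_zero_of_linearIndependent (LinearIndependent.pair_iff.2 fun s t h => ?_)
  exact hli s t (complexEquivPlane.symm.injective (by simpa using h))

theorem deriv_complexEquivPlane_symm_arc (i : Fin na) (t : ℝ) :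
    deriv (fun t => complexEquivPlane.symm (D.arc i t)) t =
      complexEquivPlane.symm (D.tangent (.inl (i, t))) :=
  (complexEquivPlane.symm.toContinuousLinearEquiv.hasFDerivAt.comp_hasDerivAt t
    ((D.arc_smooth i).differentiable (by simp) t).hasDerivAt).deriv

theorem injOn_time_coincidences (i j : Fin na) :
    InjOn (fun x : Σ _ : Plane, ((Fin na × ℝ) ⊕ (Fin nl × ℝ)) × ((Fin na × ℝ) ⊕ (Fin nl × ℝ)) =>
      (time x.2.1, time x.2.2))
      {x ∈ D.coincidences | strand x.2.1 = .inl i ∧ strand x.2.2 = .inl j} := by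
  intro x hx y hy hxy
  simp only [mem_ofPred_eq, strand_eq_inl_iff] at hx hy
  obtain ⟨hs, ht⟩ := Prod.mk.inj hxy
  have h1 : x.2.1 = y.2.1 := by rw [hx.2.1, hy.2.1, hs]
  have h2 : x.2.2 = y.2.2 := by rw [hx.2.2, hy.2.2, ht]
  have hp := D.eq_of_mem_passages (mem_coincidences.1 hx.1).2.1
    (h1 ▸ (mem_coincidences.1 hy.1).2.1)
  exact Sigma.ext hp (heq_of_eq (Prod.ext h1 h2))

theorem two_mul_crossingNumber_inl {i j : Fin na} {α β γ δ : ℝ}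
    (hi : IsChordArc (fun t => complexEquivPlane.symm (D.arc i t)) α β)
    (hj : IsChordArc (fun t => complexEquivPlane.symm (D.arc j t)) γ δ)
    (hαγ : α ≠ γ) (hαδ : α ≠ δ) (hβγ : β ≠ γ) (hβδ : β ≠ δ) :
    2 * D.crossingNumber (.inl i) (.inl j) = SignType.sign (δ - β) - SignType.sign (γ - β) -
      SignType.sign (δ - α) + SignType.sign (γ - α) := by
  have hij : i ≠ j := by
    rintro rfl
    exact injOn_exp_mul_I.ne hi.source_mem hj.source_mem hαγ (hi.source.symm.trans hj.source)
  have hinl : ∀ x ∈ D.coincidences.filter fun x => strand x.2.1 = .inl i ∧ strand x.2.2 = .inl j,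
      x ∈ D.coincidences ∧ x.2.1 = .inl (i, time x.2.1) ∧ x.2.2 = .inl (j, time x.2.2) :=
    fun x hx => by rwa [Finset.mem_filter, strand_eq_inl_iff, strand_eq_inl_iff] at hx
  rw [← hi.two_mul_sum_sign_cross hj hαγ hαδ hβγ hβδ (Z := (D.coincidences.filter fun x =>
    strand x.2.1 = .inl i ∧ strand x.2.2 = .inl j).image fun x => (time x.2.1, time x.2.2)),
    Finset.sum_image]
  · refine congrArg _ (Finset.sum_congr rfl fun x hx => ?_)
    rw [passageSign, crossSign, D.deriv_complexEquivPlane_symm_arc,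
      D.deriv_complexEquivPlane_symm_arc, ← (hinl x hx).2.1, ← (hinl x hx).2.2]
  · simpa using D.injOn_time_coincidences i j
  · rintro ⟨s, t⟩
    rw [complexEquivPlane.symm.injective.eq_iff, ← D.exists_mem_coincidences_iff hij]
    simp only [Finset.mem_image, Finset.mem_filter, Prod.mk.injEq]
    constructor
    · rintro ⟨⟨p, q, q'⟩, ⟨hx, hq, hq'⟩, rfl, rfl⟩
      exact ⟨p, strand_eq_inl_iff.1 hq ▸ strand_eq_inl_iff.1 hq' ▸ hx⟩
    · rintro ⟨p, hx⟩
      exact ⟨_, ⟨hx, rfl, rfl⟩, rfl, rfl⟩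
  · simp only [Finset.forall_mem_image]
    intro x hx
    rw [D.deriv_complexEquivPlane_symm_arc, D.deriv_complexEquivPlane_symm_arc,
      ← (hinl x hx).2.1, ← (hinl x hx).2.2]
    exact D.cross_ne_zero_of_mem_coincidences (hinl x hx).1 (by
      rw [(hinl x hx).2.1, (hinl x hx).2.2]
      simp [hij])

theorem sum_ite_crossing_le_tripleCount {α β : Fin na → ℝ}
    (hα : ∀ i, α i ∈ Ico 0 (2 * π)) (hβ : ∀ i, β i ∈ Ico 0 (2 * π))
    (hsource : ∀ i, D.arc i 0 = unitPt (α i)) (htarget : ∀ i, D.arc i 1 = unitPt (β i))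
    (hα_inj : Function.Injective α) (hβ_inj : Function.Injective β) (hαβ : ∀ i j, α i ≠ β j) :
    ∑ i, ∑ j, ((if α i < α j ∧ α j < β i ∧ β i < β j then 1 else 0) +
      (if β i < β j ∧ β j < α i ∧ α i < α j then 1 else 0) : ℝ) ≤ D.tripleCount := by
  classical
  let r : Fin na ⊕ Fin nl → Fin na ⊕ Fin nl → Prop :=
    Sum.LiftRel (fun i j => α i < α j ∧ (α i < β i ↔ α j < β j)) fun _ _ => False
  have : IsStrictOrder _ r :=
    { irrefl := by rintro (i | i) <;> simp [r]
      trans := by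
        rintro (i | i) (j | j) (k | k) <;> simp [r]
        grind }
  refine le_trans (le_of_eq ?_) (D.sum_crossingNumber_le_tripleCount r)
  simp only [Fintype.sum_sum_type, r, Sum.liftRel_inl_inl, Sum.not_liftRel_inl_inr,
    Sum.not_liftRel_inr_inl, Sum.liftRel_inr_inr, if_false, Finset.sum_const_zero, add_zero]
  refine Finset.sum_congr rfl fun i _ => Finset.sum_congr rfl fun j _ => ?_
  by_cases hr : α i < α j ∧ (α i < β i ↔ α j < β j)
  · have hij : i ≠ j := fun h => hr.1.ne (congrArg α h)
    rw [if_pos hr, ← mul_right_inj' two_ne_zero, two_mul_ite_lt_eq_sign hr.1 (hαβ i j)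
      (hαβ j i) (hβ_inj.ne hij) hr.2]
    exact (D.two_mul_crossingNumber_inl
      (D.isChordArc_arc (hα i) (hβ i) (hsource i) (htarget i))
      (D.isChordArc_arc (hα j) (hβ j) (hsource j) (htarget j)) (hα_inj.ne hij) (hαβ i j)
      (hαβ j i).symm (hβ_inj.ne hij)).symm
  · rw [if_neg hr, if_neg fun h => hr (by grind), if_neg fun h => hr (by grind), add_zero]

end TripleDiagram

theorem strictMono_natCast_mul_pi_div {n : ℕ} (hn : n ≠ 0) :
    StrictMono fun k : ℕ => (k : ℝ) * π / n := fun k l h => by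
  have : (0 : ℝ) < n := by positivity
  dsimp only
  gcongr

theorem natCast_mul_pi_div_mem_Ico {n k : ℕ} (hk : k < 2 * n) :
    (k : ℝ) * π / n ∈ Ico 0 (2 * π) := by
  have hn : 0 < n := by lia
  refine ⟨by positivity, ?_⟩
  convert strictMono_natCast_mul_pi_div hn.ne' hk using 1
  push_cast
  field_simp

theorem Ncross_eq_sum (n : ℕ) (σ : Equiv.Perm (Fin n)) :
    Ncross n σ = ∑ i : Fin n, ∑ j : Fin n,
      ((if 2 * (i : ℕ) < 2 * (j : ℕ) ∧ 2 * (j : ℕ) < 2 * (σ i : ℕ) + 1 ∧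
          2 * (σ i : ℕ) + 1 < 2 * (σ j : ℕ) + 1 then 1 else 0) +
        (if 2 * (σ i : ℕ) + 1 < 2 * (σ j : ℕ) + 1 ∧ 2 * (σ j : ℕ) + 1 < 2 * (i : ℕ) ∧
          2 * (i : ℕ) < 2 * (j : ℕ) then 1 else 0)) := by
  simp only [Finset.sum_add_distrib]
  conv_rhs => rw [add_comm, Finset.sum_comm, add_comm]
  simp only [← Finset.sum_add_distrib]
  rw [Ncross, Finset.card_filter, Fintype.sum_prod_type]
  refine Finset.sum_congr rfl fun i _ => Finset.sum_congr rfl fun j _ => ?_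
  have hij : (i : ℕ) = j ↔ i = j := Fin.val_inj
  grind

theorem Ncross_le_tripleCount {n nl : ℕ} {σ : Equiv.Perm (Fin n)} {D : TripleDiagram n nl}
    (hD : Realizes D σ) : Ncross n σ ≤ D.tripleCount := by
  rcases eq_or_ne n 0 with rfl | hn
  · simp [Ncross]
  have hθ := strictMono_natCast_mul_pi_div hn
  have h := D.sum_ite_crossing_le_tripleCount
    (fun i => natCast_mul_pi_div_mem_Ico (k := 2 * i) (by lia))
    (fun i => natCast_mul_pi_div_mem_Ico (k := 2 * σ i + 1) (by lia))
    (fun i => (hD i).1) (fun i => (hD i).2)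
    (fun i j h => Fin.ext (by have := hθ.injective h; lia))
    (fun i j h => σ.injective (Fin.ext (by have := hθ.injective h; lia)))
    (fun i j h => by have := hθ.injective h; lia)
  simp only [hθ.lt_iff_lt] at h
  rw [Ncross_eq_sum]
  exact_mod_cast h

section SmoothTransition

theorem hasDerivAt_expNegInvGlue (x : ℝ) :
    HasDerivAt expNegInvGlue (x⁻¹ ^ 2 * expNegInvGlue x) x := by
  simpa using expNegInvGlue.hasDerivAt_polynomial_eval_inv_mul 1 x

theorem hasDerivAt_smoothTransition (x : ℝ) :
    HasDerivAt smoothTransition (deriv smoothTransition x) x :=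
  (smoothTransition.contDiff (n := 1).differentiable one_ne_zero x).hasDerivAt

theorem deriv_smoothTransition_of_one_le {x : ℝ} (hx : 1 ≤ x) : deriv smoothTransition x = 0 :=
  IsLocalMax.deriv_eq_zero <| .of_forall fun y => by
    rw [smoothTransition.one_of_one_le hx]
    exact smoothTransition.le_one y

theorem deriv_smoothTransition_of_nonpos {x : ℝ} (hx : x ≤ 0) : deriv smoothTransition x = 0 :=
  IsLocalMin.deriv_eq_zero <| .of_forall fun y => by
    rw [smoothTransition.zero_of_nonpos hx]
    exact smoothTransition.nonneg y

theorem deriv_smoothTransition_pos {x : ℝ} (h0 : 0 < x) (h1 : x < 1) :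
    0 < deriv smoothTransition x := by
  have h1' : 0 < 1 - x := sub_pos.2 h1
  have hrefl := (hasDerivAt_expNegInvGlue (1 - x)).comp x ((hasDerivAt_id x).const_sub 1)
  have hderiv : HasDerivAt smoothTransition _ x := (hasDerivAt_expNegInvGlue x).div
    ((hasDerivAt_expNegInvGlue x).add hrefl) (smoothTransition.pos_denom x).ne'
  have hg := expNegInvGlue.pos_of_pos h0
  have hg' := expNegInvGlue.pos_of_pos h1'
  rw [hderiv.deriv]
  refine div_pos ?_ (by positivity)
  calc 0 < (x⁻¹ ^ 2 + (1 - x)⁻¹ ^ 2) * expNegInvGlue x * expNegInvGlue (1 - x) := by positivity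
    _ = _ := by ring

theorem strictMonoOn_smoothTransition : StrictMonoOn smoothTransition (Icc 0 1) :=
  strictMonoOn_of_deriv_pos (convex_Icc 0 1) smoothTransition.continuous.continuousOn
    fun _ hx => by
      rw [interior_Icc] at hx
      exact deriv_smoothTransition_pos hx.1 hx.2

theorem smoothTransition_half : smoothTransition (1 / 2) = 1 / 2 := by
  have := expNegInvGlue.pos_of_pos (half_pos (zero_lt_one' ℝ))
  rw [smoothTransition, sub_half]
  field_simp
  norm_num

theorem smoothTransition_eq_half_iff {x : ℝ} : smoothTransition x = 1 / 2 ↔ x = 1 / 2 := by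
  refine ⟨fun h => ?_, fun h => h ▸ smoothTransition_half⟩
  have h0 : 0 < x := by
    by_contra! hx
    norm_num [smoothTransition.zero_of_nonpos hx] at h
  have h1 : x < 1 := by
    by_contra! hx
    norm_num [smoothTransition.one_of_one_le hx] at h
  exact strictMonoOn_smoothTransition.injOn ⟨h0.le, h1.le⟩ (by norm_num)
    (h.trans smoothTransition_half.symm)

end SmoothTransition

section AlternatingTriple

variable {Q Q' V W : Type*} [AddCommGroup V] [Module ℝ V] [AddCommGroup W] [Module ℝ W]

theorem linearIndependent_pair_cyclic {u v w : V} (h : LinearIndependent ℝ ![u, v])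
    {a b c : ℝ} (ha : a ≠ 0) (hc : c ≠ 0) (hsum : a • u + b • v + c • w = 0) :
    LinearIndependent ℝ ![v, w] := by
  have hw : w = (-(a / c)) • u + (-(b / c)) • v := by
    rw [← smul_right_inj hc, eq_neg_of_add_eq_zero_right hsum]
    match_scalars <;> field_simp
  simpa [hw] using (LinearIndependent.pair_add_smul_add_smul_iff (a := (0 : ℝ)) (b := 1)
    (c := -(a / c)) (d := -(b / c))).2 ⟨h, by simp [ha, hc]⟩

/-- Three branches, with tangent vectors `v`, pass through a point transversally and their
in- and outgoing rays alternate; the alternation is expressed as in `TripleDiagram`. -/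
structure IsAlternatingTriple (P : Set Q) (v : Q → V) : Prop where
  ncard_eq_three : P.ncard = 3
  pairwise_linearIndependent : P.Pairwise fun q q' => LinearIndependent ℝ ![v q, v q']
  exists_pos_sum_eq_zero : ∃ q₁ q₂ q₃, P = {q₁, q₂, q₃} ∧ ∃ a b c : ℝ, 0 < a ∧ 0 < b ∧ 0 < c ∧
    a • v q₁ + b • v q₂ + c • v q₃ = 0

theorem IsAlternatingTriple.of_linearIndependent {q₁ q₂ q₃ : Q} {v : Q → V} (h₁₂ : q₁ ≠ q₂)
    (h₂₃ : q₂ ≠ q₃) (h₃₁ : q₃ ≠ q₁) (h : LinearIndependent ℝ ![v q₁, v q₂]) {a b c : ℝ}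
    (ha : 0 < a) (hb : 0 < b) (hc : 0 < c) (hsum : a • v q₁ + b • v q₂ + c • v q₃ = 0) :
    IsAlternatingTriple {q₁, q₂, q₃} v where
  ncard_eq_three := Set.ncard_eq_three.2 ⟨q₁, q₂, q₃, h₁₂, h₃₁.symm, h₂₃, rfl⟩
  pairwise_linearIndependent := by
    have hv₂₃ := linearIndependent_pair_cyclic h ha.ne' hc.ne' hsum
    have hv₃₁ := linearIndependent_pair_cyclic hv₂₃ (b := c) hb.ne' ha.ne'
      (by rw [← hsum]; abel)
    have hsymm : Std.Symm fun q q' => LinearIndependent ℝ ![v q, v q'] :=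
      ⟨fun _ _ => LinearIndependent.pair_symm_iff.1⟩
    simp [Set.pairwise_insert_of_symm, h, hv₂₃, hsymm.symm _ _ hv₃₁]
  exists_pos_sum_eq_zero := ⟨q₁, q₂, q₃, rfl, a, b, c, ha, hb, hc, hsum⟩

theorem IsAlternatingTriple.image {P : Set Q} {v : Q → V} (h : IsAlternatingTriple P v)
    {e : Q → Q'} (he : Function.Injective e) {T : V →ₗ[ℝ] W} (hT : Function.Injective T)
    {v' : Q' → W} (hv' : ∀ q ∈ P, v' (e q) = T (v q)) : IsAlternatingTriple (e '' P) v' where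
  ncard_eq_three := by rw [ncard_image_of_injective _ he, h.ncard_eq_three]
  pairwise_linearIndependent := by
    rintro _ ⟨q, hq, rfl⟩ _ ⟨q', hq', rfl⟩ hne
    have hli := LinearIndependent.pair_iff.1
      (h.pairwise_linearIndependent hq hq' (ne_of_apply_ne e hne))
    rw [hv' q hq, hv' q' hq']
    exact LinearIndependent.pair_iff.2 fun s t hst => hli s t (hT (by simpa using hst))
  exists_pos_sum_eq_zero := by
    obtain ⟨q₁, q₂, q₃, rfl, a, b, c, ha, hb, hc, hsum⟩ := h.exists_pos_sum_eq_zero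
    refine ⟨e q₁, e q₂, e q₃, by simp [image_insert_eq], a, b, c, ha, hb, hc, ?_⟩
    rw [hv' q₁ (by simp), hv' q₂ (by simp), hv' q₃ (by simp), ← map_smul, ← map_smul, ← map_smul,
      ← map_add, ← map_add, hsum, map_zero]

theorem IsAlternatingTriple.congr {P P' : Set Q} {v v' : Q → V} (h : IsAlternatingTriple P v)
    (hP : P' = P) (hv : EqOn v' v P) : IsAlternatingTriple P' v' := by
  simpa [hP] using h.image Function.injective_id (T := LinearMap.id) Function.injective_id hv

end AlternatingTriple

section StrandFamily

variable {ι : Type*}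

/-- The passages through `p` of the strands `γ i`, `i ∈ S`. -/
def passages (S : Finset ι) (γ : ι → ℝ → ℂ) (p : ℂ) : Set (ι × ℝ) :=
  {q | q.1 ∈ S ∧ γ q.1 q.2 = p}

/-- The points traversed more than once by the strands `γ i`, `i ∈ S`. -/
def multiplePoints (S : Finset ι) (γ : ι → ℝ → ℂ) : Set ℂ :=
  {p | ¬(passages S γ p).Subsingleton}

/-- The velocity of the family of strands `γ` at a passage. -/
noncomputable def velocity (γ : ι → ℝ → ℂ) (q : ι × ℝ) : ℂ := deriv (γ q.1) q.2

/-- The positions `a i`, `c i` of the incoming and outgoing ends of the strands in `S` are pairwise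
distinct. -/
structure HasDistinctEnds (S : Finset ι) (a c : ι → ℝ) : Prop where
  injOn_source : Set.InjOn a S
  injOn_target : Set.InjOn c S
  source_ne_target : ∀ i ∈ S, ∀ j ∈ S, a i ≠ c j

theorem HasDistinctEnds.comp_injective {S : Finset ι} {a c : ι → ℝ} (h : HasDistinctEnds S a c)
    {ρ : ℝ → ℝ} (hρ : Function.Injective ρ) : HasDistinctEnds S (ρ ∘ a) (ρ ∘ c) where
  injOn_source := hρ.comp_injOn h.injOn_source
  injOn_target := hρ.comp_injOn h.injOn_target
  source_ne_target i hi j hj := hρ.ne (h.source_ne_target i hi j hj)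

/-- The position of the leg of strand `i` that contains the parameter `t`: strands come in from
below at position `a i` and leave downwards at position `c i`. -/
noncomputable def foot (a c : ι → ℝ) (i : ι) (t : ℝ) : ℝ := if t < 0 then a i else c i

theorem foot_of_neg {a c : ι → ℝ} {i : ι} {t : ℝ} (ht : t < 0) : foot a c i t = a i := if_pos ht

theorem foot_of_nonneg {a c : ι → ℝ} {i : ι} {t : ℝ} (ht : 0 ≤ t) : foot a c i t = c i :=
  if_neg ht.not_gt

theorem foot_comp (ρ : ℝ → ℝ) (a c : ι → ℝ) (i : ι) (t : ℝ) :
    foot (ρ ∘ a) (ρ ∘ c) i t = ρ (foot a c i t) := by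
  unfold foot
  split_ifs <;> rfl

theorem HasDistinctEnds.eq_of_foot_eq {S : Finset ι} {a c : ι → ℝ} (h : HasDistinctEnds S a c)
    {q q' : ι × ℝ} (hq : q.1 ∈ S) (hq' : q'.1 ∈ S) (habs : |q.2| = |q'.2|)
    (hfoot : foot a c q.1 q.2 = foot a c q'.1 q'.2) : q = q' := by
  unfold foot at hfoot
  split_ifs at hfoot with hs ht ht
  · rw [abs_of_neg hs, abs_of_neg ht, neg_inj] at habs
    exact Prod.ext (h.injOn_source hq hq' hfoot) habs
  · exact (h.source_ne_target _ hq _ hq' hfoot).elim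
  · exact (h.source_ne_target _ hq' _ hq hfoot.symm).elim
  · rw [abs_of_nonneg (not_lt.1 hs), abs_of_nonneg (not_lt.1 ht)] at habs
    exact Prod.ext (h.injOn_target hq hq' hfoot) habs

/-- A triple diagram unrolled in the plane: strand `i` comes straight up from below at position
`a i`, stays above height `-M` for parameters in `(-M, M)`, and leaves straight downwards at
position `c i`; the whole diagram lies in the strip `L ≤ re ≤ R`. -/
structure IsLegDiagram (S : Finset ι) (a c : ι → ℝ) (L R M : ℝ) (γ : ι → ℝ → ℂ) : Prop where
  pos : 0 < M
  contDiff : ∀ i ∈ S, ContDiff ℝ (⊤ : ℕ∞) (γ i)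
  velocity_ne_zero : ∀ i ∈ S, ∀ t, velocity γ (i, t) ≠ 0
  eq_of_le_abs : ∀ i ∈ S, ∀ t, M ≤ |t| → γ i t = ⟨foot a c i t, -|t|⟩
  neg_lt_im : ∀ i ∈ S, ∀ t, |t| < M → -M < (γ i t).im
  re_mem : ∀ i ∈ S, ∀ t, (γ i t).re ∈ Icc L R
  finite : (multiplePoints S γ).Finite
  triple : ∀ p ∈ multiplePoints S γ, IsAlternatingTriple (passages S γ p) (velocity γ)

namespace IsLegDiagram

variable {S : Finset ι} {a c : ι → ℝ} {L R M : ℝ} {γ : ι → ℝ → ℂ}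
  (h : IsLegDiagram S a c L R M γ)

include h

theorem le_abs_of_im_le {i : ι} (hi : i ∈ S) {t : ℝ} (ht : (γ i t).im ≤ -M) : M ≤ |t| := by
  by_contra! hlt
  exact ht.not_gt (h.neg_lt_im i hi t hlt)

theorem abs_eq_of_im_le {i : ι} (hi : i ∈ S) {t : ℝ} (ht : (γ i t).im ≤ -M) :
    |t| = -(γ i t).im := by
  rw [h.eq_of_le_abs i hi t (h.le_abs_of_im_le hi ht), neg_neg]

theorem velocity_of_le_neg {i : ι} (hi : i ∈ S) {t : ℝ} (ht : t ≤ -M) :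
    velocity γ (i, t) = Complex.I := by
  have heq : EqOn (γ i) (fun s : ℝ => a i + s * Complex.I) (Iic (-M)) := fun s hs => by
    have hs0 : s < 0 := (mem_Iic.1 hs).trans_lt (neg_lt_zero.2 h.pos)
    rw [h.eq_of_le_abs i hi s (by rw [abs_of_neg hs0]; exact le_neg_of_le_neg hs), foot_of_neg hs0,
      abs_of_neg hs0]
    simp [Complex.ext_iff]
  have hline : HasDerivAt (fun s : ℝ => (a i : ℂ) + s * Complex.I) Complex.I t := by
    simpa using ((hasDerivAt_id t).ofReal_comp.mul_const Complex.I).const_add (a i : ℂ)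
  have hγ := ((h.contDiff i hi).differentiable (by simp) t).hasDerivAt
  exact (uniqueDiffOn_Iic (-M) t ht).eq_deriv _ hγ.hasDerivWithinAt
    (hline.hasDerivWithinAt.congr_of_mem heq ht)

theorem velocity_of_le {i : ι} (hi : i ∈ S) {t : ℝ} (ht : M ≤ t) :
    velocity γ (i, t) = -Complex.I := by
  have heq : EqOn (γ i) (fun s : ℝ => c i - s * Complex.I) (Ici M) := fun s hs => by
    have hs0 : 0 ≤ s := h.pos.le.trans hs
    rw [h.eq_of_le_abs i hi s (by rwa [abs_of_nonneg hs0]), foot_of_nonneg hs0, abs_of_nonneg hs0]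
    simp [Complex.ext_iff]
  have hline : HasDerivAt (fun s : ℝ => (c i : ℂ) - s * Complex.I) (-Complex.I) t := by
    simpa using ((hasDerivAt_id t).ofReal_comp.mul_const Complex.I).const_sub (c i : ℂ)
  have hγ := ((h.contDiff i hi).differentiable (by simp) t).hasDerivAt
  exact (uniqueDiffOn_Ici M t ht).eq_deriv _ hγ.hasDerivWithinAt
    (hline.hasDerivWithinAt.congr_of_mem heq ht)

theorem source_mem {i : ι} (hi : i ∈ S) : a i ∈ Icc L R := by
  have := h.re_mem i hi (-M)
  rwa [h.eq_of_le_abs i hi _ (by simp [le_abs_self]), foot_of_neg (neg_lt_zero.2 h.pos)] at this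

theorem target_mem {i : ι} (hi : i ∈ S) : c i ∈ Icc L R := by
  have := h.re_mem i hi M
  rwa [h.eq_of_le_abs i hi _ (le_abs_self M), foot_of_nonneg h.pos.le] at this

theorem foot_mem {i : ι} (hi : i ∈ S) (t : ℝ) : foot a c i t ∈ Icc L R := by
  unfold foot
  split_ifs
  exacts [h.source_mem hi, h.target_mem hi]

theorem subsingleton_passages_of_im_le (hsep : HasDistinctEnds S a c) {p : ℂ} (hp : p.im ≤ -M) :
    (passages S γ p).Subsingleton := by
  rintro q ⟨hq, rfl⟩ q' ⟨hq', hqq'⟩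
  have him' : (γ q'.1 q'.2).im ≤ -M := by rwa [hqq']
  have habs := h.abs_eq_of_im_le hq hp
  rw [← hqq', ← h.abs_eq_of_im_le hq' him'] at habs
  refine hsep.eq_of_foot_eq hq hq' habs ?_
  have hre := congrArg Complex.re hqq'
  rw [h.eq_of_le_abs _ hq _ (h.le_abs_of_im_le hq hp),
    h.eq_of_le_abs _ hq' _ (h.le_abs_of_im_le hq' him')] at hre
  exact hre.symm

theorem neg_lt_im_of_mem_multiplePoints (hsep : HasDistinctEnds S a c) {p : ℂ}
    (hp : p ∈ multiplePoints S γ) : -M < p.im := by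
  by_contra! hle
  exact hp (h.subsingleton_passages_of_im_le hsep hle)

theorem re_mem_of_mem_multiplePoints {p : ℂ} (hp : p ∈ multiplePoints S γ) : p.re ∈ Icc L R := by
  obtain ⟨q, ⟨hq, rfl⟩, -⟩ := not_subsingleton_iff.1 hp
  exact h.re_mem _ hq _

end IsLegDiagram

end StrandFamily

section Reflection

open Filter Topology

/-- The map that reverses the interval `[u, v]` and fixes all other points. -/
noncomputable def flipIcc (u v x : ℝ) : ℝ := if x ∈ Icc u v then u + v - x else x

theorem flipIcc_of_mem {u v x : ℝ} (hx : x ∈ Icc u v) : flipIcc u v x = u + v - x := if_pos hx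

theorem flipIcc_of_notMem {u v x : ℝ} (hx : x ∉ Icc u v) : flipIcc u v x = x := if_neg hx

theorem flipIcc_mem_Icc_iff {u v x : ℝ} : flipIcc u v x ∈ Icc u v ↔ x ∈ Icc u v := by
  unfold flipIcc
  split_ifs with hx
  · simp only [mem_Icc] at hx ⊢
    grind
  · rfl

theorem flipIcc_mem_Icc_of_mem {u v x L R : ℝ} (hu : u ∈ Icc L R) (hv : v ∈ Icc L R)
    (hx : x ∈ Icc L R) : flipIcc u v x ∈ Icc L R := by
  by_cases hmem : x ∈ Icc u v
  · rw [flipIcc_of_mem hmem]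
    exact ⟨by linarith [hu.1, hmem.2], by linarith [hv.2, hmem.1]⟩
  · rwa [flipIcc_of_notMem hmem]

theorem flipIcc_flipIcc (u v x : ℝ) : flipIcc u v (flipIcc u v x) = x := by
  by_cases hx : x ∈ Icc u v
  · rw [flipIcc_of_mem (flipIcc_mem_Icc_iff.2 hx), flipIcc_of_mem hx, sub_sub_cancel]
  · rw [flipIcc_of_notMem hx, flipIcc_of_notMem hx]

theorem mem_Icc_of_lineMap_flipIcc_mem {u v x s : ℝ}
    (hx : AffineMap.lineMap x (flipIcc u v x) s ∈ Icc u v) : x ∈ Icc u v := by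
  by_contra hx'
  rw [flipIcc_of_notMem hx', AffineMap.lineMap_same_apply] at hx
  exact hx' hx

theorem eq_or_eq_half_of_lineMap_flipIcc_eq {u v x y s : ℝ} (hs : s ∈ Icc (0 : ℝ) 1)
    (hxy : AffineMap.lineMap x (flipIcc u v x) s = AffineMap.lineMap y (flipIcc u v y) s) :
    x = y ∨ s = 1 / 2 ∧ x ∈ Icc u v ∧ y ∈ Icc u v := by
  have hmaps : ∀ z ∈ Icc u v, AffineMap.lineMap z (flipIcc u v z) s ∈ Icc u v := fun z hz =>
    (convex_Icc u v).lineMap_mem hz (flipIcc_mem_Icc_iff.2 hz) hs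
  by_cases hx : x ∈ Icc u v <;> by_cases hy : y ∈ Icc u v
  · rw [flipIcc_of_mem hx, flipIcc_of_mem hy, AffineMap.lineMap_apply_ring',
      AffineMap.lineMap_apply_ring'] at hxy
    have hprod : (1 - 2 * s) * (x - y) = 0 := by linear_combination hxy
    rcases mul_eq_zero.1 hprod with h | h
    · exact .inr ⟨by linarith, hx, hy⟩
    · exact .inl (sub_eq_zero.1 h)
  · exact (hy (mem_Icc_of_lineMap_flipIcc_mem (hxy ▸ hmaps x hx))).elim
  · exact (hx (mem_Icc_of_lineMap_flipIcc_mem (hxy ▸ hmaps y hy))).elim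
  · rw [flipIcc_of_notMem hx, flipIcc_of_notMem hy, AffineMap.lineMap_same_apply,
      AffineMap.lineMap_same_apply] at hxy
    exact .inl hxy

theorem flipIcc_injective (u v : ℝ) : Function.Injective (flipIcc u v) :=
  Function.LeftInverse.injective (flipIcc_flipIcc u v)

variable {ι : Type*}

/-- The family `γ`, whose legs stand at the positions `ρ (a i)` and `ρ (c i)`, with the legs bent
between the depths `M + 1` and `M + 2` to the positions `a i` and `c i`. -/
noncomputable def bendLegs (ρ : ℝ → ℝ) (a c : ι → ℝ) (M : ℝ) (γ : ι → ℝ → ℂ) (i : ι) (t : ℝ) : ℂ :=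
  γ i t + ((a i - ρ (a i)) * (1 - smoothTransition (t + M + 2)) +
    (c i - ρ (c i)) * (1 - smoothTransition (-t + M + 2)) : ℝ)

variable {S : Finset ι} {ρ : ℝ → ℝ} {a c : ι → ℝ} {L R M : ℝ} {γ : ι → ℝ → ℂ} {i j k : ι} {t : ℝ}

theorem bendLegs_im : (bendLegs ρ a c M γ i t).im = (γ i t).im := by simp [bendLegs]

theorem bendLegs_of_abs_le (ht : |t| ≤ M + 1) : bendLegs ρ a c M γ i t = γ i t := by
  obtain ⟨hl, hr⟩ := abs_le.1 ht
  rw [bendLegs, smoothTransition.one_of_one_le (by linarith),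
    smoothTransition.one_of_one_le (by linarith)]
  simp

theorem bendLegs_eq_add_foot (hM : 0 < M) :
    bendLegs ρ a c M γ i t = γ i t + ((foot a c i t - ρ (foot a c i t)) *
      (1 - smoothTransition (M + 2 - |t|)) : ℝ) := by
  rcases lt_or_ge t 0 with ht | ht
  · rw [bendLegs, foot_of_neg ht, abs_of_neg ht, smoothTransition.one_of_one_le (x := -t + M + 2)
      (by linarith), show t + M + 2 = M + 2 - -t by ring, sub_self, mul_zero, add_zero]
  · rw [bendLegs, foot_of_nonneg ht, abs_of_nonneg ht, smoothTransition.one_of_one_le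
      (x := t + M + 2) (by linarith), show -t + M + 2 = M + 2 - t by ring, sub_self, mul_zero,
      zero_add]

theorem contDiff_bendLegs (hγ : ContDiff ℝ (⊤ : ℕ∞) (γ i)) :
    ContDiff ℝ (⊤ : ℕ∞) (bendLegs ρ a c M γ i) := by
  have hst : ContDiff ℝ (⊤ : ℕ∞) smoothTransition := smoothTransition.contDiff
  have hleft := hst.comp (f := fun t => t + M + 2) (by fun_prop)
  have hright := hst.comp (f := fun t => -t + M + 2) (by fun_prop)
  exact hγ.add (Complex.ofRealCLM.contDiff.comp ((contDiff_const.mul (contDiff_const.sub hleft)).add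
    (contDiff_const.mul (contDiff_const.sub hright))))

theorem velocity_bendLegs_of_abs_lt (ht : |t| < M + 1) :
    velocity (bendLegs ρ a c M γ) (i, t) = velocity γ (i, t) := by
  refine EventuallyEq.deriv_eq ?_
  filter_upwards [continuous_abs.continuousAt.eventually_lt_const ht] with s hs
    using bendLegs_of_abs_le hs.le

theorem velocity_bendLegs (hγ : ContDiff ℝ (⊤ : ℕ∞) (γ i)) :
    velocity (bendLegs ρ a c M γ) (i, t) = velocity γ (i, t) +
      ((c i - ρ (c i)) * deriv smoothTransition (-t + M + 2) -
        (a i - ρ (a i)) * deriv smoothTransition (t + M + 2) : ℝ) := by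
  have hleft := (hasDerivAt_smoothTransition (t + M + 2)).comp t
    (((hasDerivAt_id t).add_const M).add_const 2)
  have hright := (hasDerivAt_smoothTransition (-t + M + 2)).comp t
    (((hasDerivAt_id t).neg.add_const M).add_const 2)
  have hγt := (hγ.differentiable (by simp) t).hasDerivAt
  have hbend : HasDerivAt (bendLegs ρ a c M γ i) _ t := hγt.add
    (((hleft.const_sub 1).const_mul (a i - ρ (a i))).add
      ((hright.const_sub 1).const_mul (c i - ρ (c i)))).ofReal_comp
  rw [velocity, hbend.deriv, velocity]
  push_cast
  ring

section

variable (h : IsLegDiagram S (ρ ∘ a) (ρ ∘ c) L R M γ)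

include h

namespace IsLegDiagram

theorem bendLegs_eq (hi : i ∈ S) (ht : M ≤ |t|) :
    bendLegs ρ a c M γ i t = ⟨AffineMap.lineMap (foot a c i t) (ρ (foot a c i t))
      (smoothTransition (M + 2 - |t|)), -|t|⟩ := by
  rw [bendLegs_eq_add_foot h.pos, h.eq_of_le_abs i hi t ht, foot_comp]
  refine Complex.ext ?_ (by simp)
  simp [AffineMap.lineMap_apply_ring']
  ring

theorem passages_bendLegs {p : ℂ} (hp : -(M + 1) ≤ p.im) :
    passages S (bendLegs ρ a c M γ) p = passages S γ p := by
  have habs : ∀ i ∈ S, ∀ t, (γ i t).im = p.im → |t| ≤ M + 1 := fun i hi t him => by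
    by_contra! hlt
    rw [h.eq_of_le_abs i hi t (by linarith)] at him
    simp only at him
    linarith
  ext ⟨i, t⟩
  refine and_congr_right fun hi => ⟨fun hit => ?_, fun hit => ?_⟩
  · rw [← hit, bendLegs_of_abs_le (habs i hi t (by rw [← hit, bendLegs_im]))]
  · rw [← hit, bendLegs_of_abs_le (habs i hi t (by rw [← hit]))]

theorem velocity_bendLegs_ne_zero (hi : i ∈ S) :
    velocity (bendLegs ρ a c M γ) (i, t) ≠ 0 := by
  rcases lt_or_ge |t| (M + 1) with ht | ht
  · rw [velocity_bendLegs_of_abs_lt ht]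
    exact h.velocity_ne_zero i hi t
  · intro hzero
    have him := congrArg Complex.im hzero
    rw [velocity_bendLegs (h.contDiff i hi)] at him
    rcases le_abs.1 ht with ht | ht
    · simp [h.velocity_of_le hi (t := t) (by linarith)] at him
    · simp [h.velocity_of_le_neg hi (t := t) (by linarith)] at him

end IsLegDiagram

end

/-- The point in which `bendLegs` makes the legs meet that stand in `[u, v]`. -/
noncomputable def legCrossing (u v M : ℝ) : ℂ := ⟨(u + v) / 2, -(M + 3 / 2)⟩

namespace IsLegDiagram

variable {u v : ℝ} (h : IsLegDiagram S (flipIcc u v ∘ a) (flipIcc u v ∘ c) L R M γ)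

include h

theorem bendLegs_eq_legCrossing (hi : i ∈ S) (ht : |t| = M + 3 / 2)
    (hfoot : foot a c i t ∈ Icc u v) :
    bendLegs (flipIcc u v) a c M γ i t = legCrossing u v M := by
  rw [h.bendLegs_eq hi (by linarith), ht, show M + 2 - (M + 3 / 2) = 1 / 2 by ring,
    smoothTransition_half, flipIcc_of_mem hfoot, AffineMap.lineMap_apply_ring', legCrossing]
  congr 1
  ring

theorem eq_or_mem_of_mem_passages (hsep : HasDistinctEnds S a c) {p : ℂ} (hp : p.im ≤ -(M + 1))
    {q q' : ι × ℝ} (hq : q ∈ passages S (bendLegs (flipIcc u v) a c M γ) p)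
    (hq' : q' ∈ passages S (bendLegs (flipIcc u v) a c M γ) p) :
    q = q' ∨ |q.2| = M + 3 / 2 ∧ foot a c q.1 q.2 ∈ Icc u v ∧ |q'.2| = M + 3 / 2 ∧
      foot a c q'.1 q'.2 ∈ Icc u v := by
  have habs : ∀ q ∈ passages S (bendLegs (flipIcc u v) a c M γ) p, M ≤ |q.2| ∧ |q.2| = -p.im := by
    rintro r ⟨hr, hrp⟩
    have him := congrArg Complex.im hrp
    rw [bendLegs_im] at him
    exact ⟨h.le_abs_of_im_le hr (by linarith), by rw [h.abs_eq_of_im_le hr (by linarith), him]⟩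
  have hqq' := (habs q hq).2.trans (habs q' hq').2.symm
  have hre := congrArg Complex.re (hq.2.trans hq'.2.symm)
  rw [h.bendLegs_eq hq.1 (habs q hq).1, h.bendLegs_eq hq'.1 (habs q' hq').1, ← hqq'] at hre
  rcases eq_or_eq_half_of_lineMap_flipIcc_eq
    ⟨smoothTransition.nonneg _, smoothTransition.le_one _⟩ hre with heq | ⟨hhalf, hx, hy⟩
  · exact .inl (hsep.eq_of_foot_eq hq.1 hq'.1 hqq' heq)
  · have hdepth : |q.2| = M + 3 / 2 := by linarith [smoothTransition_eq_half_iff.1 hhalf]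
    exact .inr ⟨hdepth, hx, hqq' ▸ hdepth, hy⟩

theorem subsingleton_passages_bendLegs (hsep : HasDistinctEnds S a c) {p : ℂ} (hp : p.im ≤ -(M + 1))
    (hne : p ≠ legCrossing u v M) :
    (passages S (bendLegs (flipIcc u v) a c M γ) p).Subsingleton := fun _ hq _ hq' =>
  (h.eq_or_mem_of_mem_passages hsep hp hq hq').resolve_right fun hmem =>
    hne (hq.2.symm.trans (h.bendLegs_eq_legCrossing hq.1 hmem.1 hmem.2.1))

theorem velocity_bendLegs_source (hi : i ∈ S) (hmem : a i ∈ Icc u v) :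
    velocity (bendLegs (flipIcc u v) a c M γ) (i, -(M + 3 / 2)) =
      ⟨(u + v - 2 * a i) * deriv smoothTransition (1 / 2), 1⟩ := by
  have hM := h.pos
  rw [velocity_bendLegs (h.contDiff i hi), h.velocity_of_le_neg hi (by linarith),
    flipIcc_of_mem hmem, deriv_smoothTransition_of_one_le (by linarith),
    show -(M + 3 / 2) + M + 2 = 1 / 2 by ring]
  refine Complex.ext ?_ (by simp)
  simp only [Complex.add_re, Complex.I_re, Complex.ofReal_re]
  ring

theorem velocity_bendLegs_target (hi : i ∈ S) (hmem : c i ∈ Icc u v) :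
    velocity (bendLegs (flipIcc u v) a c M γ) (i, M + 3 / 2) =
      ⟨(2 * c i - u - v) * deriv smoothTransition (1 / 2), -1⟩ := by
  have hM := h.pos
  rw [velocity_bendLegs (h.contDiff i hi), h.velocity_of_le hi (by linarith), flipIcc_of_mem hmem,
    deriv_smoothTransition_of_one_le (x := M + 3 / 2 + M + 2) (by linarith),
    show -(M + 3 / 2) + M + 2 = 1 / 2 by ring]
  refine Complex.ext ?_ (by simp)
  simp only [Complex.add_re, Complex.neg_re, Complex.I_re, Complex.ofReal_re]
  ring

end IsLegDiagram

/-- Among the positions of the strands in `S`, the source of `i`, the target of `k` and the source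
of `j` are consecutive, in this order. -/
structure IsConsecutive (S : Finset ι) (a c : ι → ℝ) (i k j : ι) : Prop where
  left_mem : i ∈ S
  mid_mem : k ∈ S
  right_mem : j ∈ S
  target_mem : c k ∈ Ioo (a i) (a j)
  eq_or_eq_of_mem : ∀ l ∈ S, a l ∈ Icc (a i) (a j) → l = i ∨ l = j
  eq_of_mem : ∀ l ∈ S, c l ∈ Icc (a i) (a j) → l = k

namespace IsConsecutive

variable (hs : IsConsecutive S a c i k j)

include hs

theorem source_lt : a i < a j := hs.target_mem.1.trans hs.target_mem.2

variable (h : IsLegDiagram S (flipIcc (a i) (a j) ∘ a) (flipIcc (a i) (a j) ∘ c) L R M γ)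
  (hsep : HasDistinctEnds S a c)

include h

theorem mem_Icc_of_flipIcc_mem {x : ℝ} (hx : flipIcc (a i) (a j) x ∈ Icc L R) : x ∈ Icc L R := by
  have hij := hs.source_lt.le
  have hj := h.source_mem hs.left_mem
  have hi := h.source_mem hs.right_mem
  rw [Function.comp_apply, flipIcc_of_mem (left_mem_Icc.2 hij), add_sub_cancel_left] at hj
  rw [Function.comp_apply, flipIcc_of_mem (right_mem_Icc.2 hij), add_sub_cancel_right] at hi
  rw [← flipIcc_flipIcc (a i) (a j) x]
  exact flipIcc_mem_Icc_of_mem hi hj hx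

include hsep

theorem passages_legCrossing :
    passages S (bendLegs (flipIcc (a i) (a j)) a c M γ) (legCrossing (a i) (a j) M) =
      {(i, -(M + 3 / 2)), (k, M + 3 / 2), (j, -(M + 3 / 2))} := by
  have hM := h.pos
  have hneg : -(M + 3 / 2) < 0 := by linarith
  have hpos : 0 < M + 3 / 2 := by linarith
  have hi : (i, -(M + 3 / 2)) ∈ passages S (bendLegs (flipIcc (a i) (a j)) a c M γ)
      (legCrossing (a i) (a j) M) := ⟨hs.left_mem, h.bendLegs_eq_legCrossing hs.left_mem
    (by rw [abs_neg, abs_of_pos hpos])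
    (by simpa only [foot_of_neg hneg] using Set.left_mem_Icc.2 hs.source_lt.le)⟩
  refine Subset.antisymm (fun q hq => ?_) (insert_subset hi (insert_subset ?_ ?_))
  · rcases h.eq_or_mem_of_mem_passages hsep (by simp only [legCrossing]; linarith) hi hq with
      rfl | ⟨-, -, habs, hfoot⟩
    · exact mem_insert _ _
    obtain ⟨l, t⟩ := q
    rcases lt_or_ge t 0 with ht | ht
    · rw [foot_of_neg ht] at hfoot
      rw [abs_of_neg ht, neg_eq_iff_eq_neg] at habs
      rcases hs.eq_or_eq_of_mem l hq.1 hfoot with rfl | rfl <;> simp_all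
    · rw [foot_of_nonneg ht] at hfoot
      rw [abs_of_nonneg ht] at habs
      simp_all [hs.eq_of_mem l hq.1 hfoot]
  · exact ⟨hs.mid_mem, h.bendLegs_eq_legCrossing hs.mid_mem (abs_of_pos hpos)
      (by simpa [foot_of_nonneg hpos.le] using Ioo_subset_Icc_self hs.target_mem)⟩
  · exact singleton_subset_iff.2 ⟨hs.right_mem, h.bendLegs_eq_legCrossing hs.right_mem
      (by rw [abs_neg, abs_of_pos hpos])
      (by simpa only [foot_of_neg hneg] using Set.right_mem_Icc.2 hs.source_lt.le)⟩

theorem multiplePoints_bendLegs :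
    multiplePoints S (bendLegs (flipIcc (a i) (a j)) a c M γ) =
      insert (legCrossing (a i) (a j) M) (multiplePoints S γ) := by
  have hM := h.pos
  ext p
  rw [mem_insert_iff]
  by_cases hp : p = legCrossing (a i) (a j) M
  · refine iff_of_true (fun hsub => ?_) (.inl hp)
    rw [hp, hs.passages_legCrossing h hsep] at hsub
    have heq := congrArg Prod.snd (hsub (mem_insert _ _) (mem_insert_of_mem _ (mem_insert _ _)))
    simp only at heq
    linarith
  rw [or_iff_right hp]
  rcases le_total p.im (-(M + 1)) with him | him
  · exact iff_of_false (not_not.2 (h.subsingleton_passages_bendLegs hsep him hp)) (not_not.2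
      (h.subsingleton_passages_of_im_le (hsep.comp_injective (flipIcc_injective _ _))
        (by linarith)))
  · simp only [multiplePoints, mem_ofPred_eq, h.passages_bendLegs him]

theorem ncard_multiplePoints_bendLegs :
    (multiplePoints S (bendLegs (flipIcc (a i) (a j)) a c M γ)).ncard =
      (multiplePoints S γ).ncard + 1 := by
  have hnotMem : legCrossing (a i) (a j) M ∉ multiplePoints S γ := not_not.2 <|
    h.subsingleton_passages_of_im_le (hsep.comp_injective (flipIcc_injective _ _))
      (by simp only [legCrossing]; linarith)
  rw [hs.multiplePoints_bendLegs h hsep, ncard_insert_of_notMem hnotMem h.finite]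

theorem isAlternatingTriple_legCrossing : IsAlternatingTriple
    (passages S (bendLegs (flipIcc (a i) (a j)) a c M γ) (legCrossing (a i) (a j) M))
    (velocity (bendLegs (flipIcc (a i) (a j)) a c M γ)) := by
  have hlt : -(M + 3 / 2) < M + 3 / 2 := by linarith [h.pos]
  obtain ⟨hik, hkj⟩ := hs.target_mem
  have hslope : 0 < deriv smoothTransition (1 / 2) :=
    deriv_smoothTransition_pos (by norm_num) (by norm_num)
  have hvi := h.velocity_bendLegs_source hs.left_mem (Set.left_mem_Icc.2 hs.source_lt.le)
  have hvj := h.velocity_bendLegs_source hs.right_mem (Set.right_mem_Icc.2 hs.source_lt.le)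
  have hvk := h.velocity_bendLegs_target hs.mid_mem (Ioo_subset_Icc_self hs.target_mem)
  rw [hs.passages_legCrossing h hsep]
  refine .of_linearIndependent (fun heq => hlt.ne (congrArg Prod.snd heq))
    (fun heq => hlt.ne' (congrArg Prod.snd heq))
    (fun heq => hs.source_lt.ne' (congrArg (a ∘ Prod.fst) heq)) ?_ (a := a j - c k)
    (b := a j - a i) (c := c k - a i) (by linarith) (by linarith) (by linarith) ?_
  · rw [hvi, hvk]
    refine LinearIndependent.pair_iff.2 fun s t hst => ?_
    have him : s - t = 0 := by simpa [sub_eq_add_neg] using congrArg Complex.im hst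
    have hre := congrArg Complex.re hst
    simp only [Complex.add_re, Complex.real_smul, Complex.re_ofReal_mul, Complex.zero_re] at hre
    have hs0 : s * (2 * (c k - a i) * deriv smoothTransition (1 / 2)) = 0 := by
      rw [← sub_eq_zero.1 him] at hre
      linear_combination hre
    have hs0 := (mul_eq_zero.1 hs0).resolve_right
      (mul_pos (mul_pos two_pos (sub_pos.2 hik)) hslope).ne'
    exact ⟨hs0, by linarith⟩
  · rw [hvi, hvk, hvj]
    refine Complex.ext ?_ (by simp)
    simp only [Complex.add_re, Complex.smul_re, smul_eq_mul, Complex.zero_re]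
    ring

theorem isLegDiagram_bendLegs :
    IsLegDiagram S a c L R (M + 2) (bendLegs (flipIcc (a i) (a j)) a c M γ) where
  pos := by linarith [h.pos]
  contDiff l hl := contDiff_bendLegs (h.contDiff l hl)
  velocity_ne_zero _ hl _ := h.velocity_bendLegs_ne_zero hl
  eq_of_le_abs l hl t ht := by
    rw [h.bendLegs_eq hl (by linarith), smoothTransition.zero_of_nonpos (by linarith),
      AffineMap.lineMap_apply_zero]
  neg_lt_im l hl t ht := by
    rw [bendLegs_im]
    rcases lt_or_ge |t| M with ht' | ht'
    · linarith [h.neg_lt_im l hl t ht']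
    · rw [h.eq_of_le_abs l hl t ht']
      exact neg_lt_neg ht
  re_mem l hl t := by
    rcases lt_or_ge |t| M with ht | ht
    · rw [bendLegs_of_abs_le (by linarith)]
      exact h.re_mem l hl t
    · rw [h.bendLegs_eq hl ht]
      have hflip := h.foot_mem hl t
      rw [foot_comp] at hflip
      exact (convex_Icc L R).lineMap_mem (hs.mem_Icc_of_flipIcc_mem h hflip) hflip
        ⟨smoothTransition.nonneg _, smoothTransition.le_one _⟩
  finite := by
    rw [hs.multiplePoints_bendLegs h hsep]
    exact h.finite.insert _
  triple p hp := by
    rw [hs.multiplePoints_bendLegs h hsep] at hp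
    rcases hp with rfl | hp
    · exact hs.isAlternatingTriple_legCrossing h hsep
    have him : -M < p.im := by
      by_contra! him
      exact hp (h.subsingleton_passages_of_im_le (hsep.comp_injective (flipIcc_injective _ _)) him)
    refine (h.triple p hp).congr (h.passages_bendLegs (by linarith)) ?_
    rintro ⟨l, t⟩ ⟨hl, rfl⟩
    refine velocity_bendLegs_of_abs_lt ?_
    by_contra! hlt
    rw [h.eq_of_le_abs l hl t (by linarith)] at him
    simp only at him
    linarith

end IsConsecutive

end Reflection

section Cap

/-- A smooth approximation of the positive part: it vanishes for `x ≤ 0` and equals `x` for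
`1 ≤ x`. -/
noncomputable def smoothRamp (x : ℝ) : ℝ := x * smoothTransition x

theorem smoothRamp_of_nonpos {x : ℝ} (hx : x ≤ 0) : smoothRamp x = 0 := by
  rw [smoothRamp, smoothTransition.zero_of_nonpos hx, mul_zero]

theorem smoothRamp_of_one_le {x : ℝ} (hx : 1 ≤ x) : smoothRamp x = x := by
  rw [smoothRamp, smoothTransition.one_of_one_le hx, mul_one]

theorem smoothRamp_nonneg (x : ℝ) : 0 ≤ smoothRamp x := by
  rcases le_total x 0 with hx | hx
  · rw [smoothRamp_of_nonpos hx]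
  · exact mul_nonneg hx (smoothTransition.nonneg x)

theorem smoothRamp_lt_one {x : ℝ} (hx : x < 1) : smoothRamp x < 1 := by
  rcases le_total x 0 with hx0 | hx0
  · rw [smoothRamp_of_nonpos hx0]
    exact one_pos
  · exact (mul_le_of_le_one_right hx0 (smoothTransition.le_one x)).trans_lt hx

theorem contDiff_smoothRamp : ContDiff ℝ (⊤ : ℕ∞) smoothRamp :=
  contDiff_id.mul smoothTransition.contDiff

theorem hasDerivAt_smoothRamp (x : ℝ) :
    HasDerivAt smoothRamp (smoothTransition x + x * deriv smoothTransition x) x :=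
  ((hasDerivAt_id x).mul (hasDerivAt_smoothTransition x)).congr_deriv (by simp)

theorem hasDerivAt_smoothRamp_of_nonpos {x : ℝ} (hx : x ≤ 0) : HasDerivAt smoothRamp 0 x := by
  simpa [smoothTransition.zero_of_nonpos hx, deriv_smoothTransition_of_nonpos hx]
    using hasDerivAt_smoothRamp x

theorem hasDerivAt_smoothRamp_of_one_le {x : ℝ} (hx : 1 ≤ x) : HasDerivAt smoothRamp 1 x := by
  simpa [smoothTransition.one_of_one_le hx, deriv_smoothTransition_of_one_le hx]
    using hasDerivAt_smoothRamp x

variable {u v w t : ℝ}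

/-- An arc that comes straight up at position `u` for `t ≤ -w`, crosses over at depth at least
`w - 1`, and leaves straight downwards at position `v` for `w ≤ t`. -/
noncomputable def cap (u v w t : ℝ) : ℂ :=
  ⟨AffineMap.lineMap u v (smoothTransition ((t + w) / (2 * w))),
    -(w - 1 + smoothRamp (t - (w - 1)) + smoothRamp (-t - (w - 1)))⟩

theorem cap_im (hw : 1 ≤ w) : (cap u v w t).im = -(w - 1 + smoothRamp (|t| - (w - 1))) := by
  rcases le_total 0 t with ht | ht
  · rw [cap, smoothRamp_of_nonpos (x := -t - (w - 1)) (by linarith), abs_of_nonneg ht, add_zero]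
  · rw [cap, smoothRamp_of_nonpos (x := t - (w - 1)) (by linarith), abs_of_nonpos ht, add_zero]

theorem cap_re_mem : (cap u v w t).re ∈ uIcc u v :=
  (convex_uIcc u v).lineMap_mem left_mem_uIcc right_mem_uIcc
    ⟨smoothTransition.nonneg _, smoothTransition.le_one _⟩

theorem cap_im_le (hw : 1 ≤ w) : (cap u v w t).im ≤ 1 - w := by
  rw [cap_im hw]
  linarith [smoothRamp_nonneg (|t| - (w - 1))]

theorem neg_lt_cap_im_iff (hw : 1 ≤ w) : -w < (cap u v w t).im ↔ |t| < w := by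
  rw [cap_im hw]
  rcases lt_or_ge |t| w with ht | ht
  · exact iff_of_true (by linarith [smoothRamp_lt_one (x := |t| - (w - 1)) (by linarith)]) ht
  · rw [smoothRamp_of_one_le (by linarith)]
    exact ⟨fun h => by linarith, fun h => by linarith⟩

theorem cap_of_le_abs {ι : Type*} {a c : ι → ℝ} {i : ι} (hw : 1 ≤ w) (ht : w ≤ |t|) :
    cap (a i) (c i) w t = ⟨foot a c i t, -|t|⟩ := by
  have hw0 : 0 < 2 * w := by linarith
  refine Complex.ext ?_ ?_
  · rcases lt_or_ge t 0 with h0 | h0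
    · rw [abs_of_neg h0] at ht
      simp only [cap, foot_of_neg h0]
      rw [smoothTransition.zero_of_nonpos (div_nonpos_of_nonpos_of_nonneg (by linarith) hw0.le),
        AffineMap.lineMap_apply_zero]
    · rw [abs_of_nonneg h0] at ht
      simp only [cap, foot_of_nonneg h0]
      rw [smoothTransition.one_of_one_le ((one_le_div hw0).2 (by linarith)),
        AffineMap.lineMap_apply_one]
  · rw [cap_im hw, smoothRamp_of_one_le (by linarith), add_sub_cancel]

theorem contDiff_cap : ContDiff ℝ (⊤ : ℕ∞) (cap u v w) := by
  have hst : ContDiff ℝ (⊤ : ℕ∞) smoothTransition := smoothTransition.contDiff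
  have hre := hst.comp (f := fun t => (t + w) / (2 * w)) (by fun_prop)
  have hleft := contDiff_smoothRamp.comp (f := fun t => t - (w - 1)) (by fun_prop)
  have hright := contDiff_smoothRamp.comp (f := fun t => -t - (w - 1)) (by fun_prop)
  exact Complex.equivRealProdCLM.symm.contDiff.comp
    (((hre.mul contDiff_const).add contDiff_const).prodMk
      ((contDiff_const.add hleft).add hright).neg)

theorem hasDerivAt_cap {r₁ r₂ : ℝ} (h₁ : HasDerivAt smoothRamp r₁ (t - (w - 1)))
    (h₂ : HasDerivAt smoothRamp r₂ (-t - (w - 1))) : HasDerivAt (cap u v w)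
    ⟨deriv smoothTransition ((t + w) / (2 * w)) * (1 / (2 * w)) * (v - u), r₂ - r₁⟩ t := by
  have hre := (hasDerivAt_smoothTransition ((t + w) / (2 * w))).comp t
    (((hasDerivAt_id t).add_const w).div_const (2 * w))
  have hleft := h₁.comp t ((hasDerivAt_id t).sub_const (w - 1))
  have hright := h₂.comp t ((hasDerivAt_id t).neg.sub_const (w - 1))
  have hpair := ((hre.mul_const (v - u)).add_const u).prodMk
    ((hleft.const_add (w - 1)).add hright).neg
  refine (Complex.equivRealProdCLM.symm.hasFDerivAt.comp_hasDerivAt t hpair).congr_deriv ?_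
  refine Complex.ext ?_ ?_ <;> simp
  ring

theorem deriv_cap_ne_zero (hw : 1 ≤ w) (huv : u ≠ v) : deriv (cap u v w) t ≠ 0 := by
  have hw0 : 0 < 2 * w := by linarith
  intro hzero
  rcases lt_or_ge |t| w with ht | ht
  · obtain ⟨hl, hr⟩ := abs_lt.1 ht
    have hslope := deriv_smoothTransition_pos (x := (t + w) / (2 * w))
      (div_pos (by linarith) hw0) ((div_lt_one hw0).2 (by linarith))
    rw [(hasDerivAt_cap (hasDerivAt_smoothRamp _) (hasDerivAt_smoothRamp _)).deriv] at hzero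
    exact mul_ne_zero (mul_pos hslope (one_div_pos.2 hw0)).ne' (sub_ne_zero.2 huv.symm)
      (congrArg Complex.re hzero)
  · rcases le_abs.1 ht with ht | ht
    · rw [(hasDerivAt_cap (hasDerivAt_smoothRamp_of_one_le (by linarith))
        (hasDerivAt_smoothRamp_of_nonpos (by linarith))).deriv] at hzero
      simpa using congrArg Complex.im hzero
    · rw [(hasDerivAt_cap (hasDerivAt_smoothRamp_of_nonpos (by linarith))
        (hasDerivAt_smoothRamp_of_one_le (by linarith))).deriv] at hzero
      simpa using congrArg Complex.im hzero

theorem cap_injective (hw : 1 ≤ w) (huv : u ≠ v) : Function.Injective (cap u v w) := by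
  intro s t hst
  rcases lt_or_ge |t| w with ht | ht
  · have hs : |s| < w := by rwa [← neg_lt_cap_im_iff hw, hst, neg_lt_cap_im_iff hw]
    have hw0 : 0 < 2 * w := by linarith
    have hmem : ∀ {r : ℝ}, |r| < w → (r + w) / (2 * w) ∈ Icc (0 : ℝ) 1 := fun hr =>
      ⟨div_nonneg (by linarith [(abs_lt.1 hr).1]) hw0.le,
        (div_le_one hw0).2 (by linarith [(abs_lt.1 hr).2])⟩
    have hre := AffineMap.lineMap_injective ℝ huv (congrArg Complex.re hst)
    have hdiv := strictMonoOn_smoothTransition.injOn (hmem hs) (hmem ht) hre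
    linarith [(div_left_inj' hw0.ne').1 hdiv]
  · have hs : w ≤ |s| := by
      rwa [← not_lt, ← neg_lt_cap_im_iff hw, hst, neg_lt_cap_im_iff hw, not_lt]
    have hfoot : ∀ {r : ℝ}, w ≤ |r| → cap u v w r = ⟨if r < 0 then u else v, -|r|⟩ := fun hr =>
      cap_of_le_abs (a := fun _ : Unit => u) (c := fun _ => v) (i := ()) hw hr
    rw [hfoot hs, hfoot ht, Complex.mk.injEq, neg_inj] at hst
    rcases abs_eq_abs.1 hst.2 with heq | rfl
    · exact heq
    · grind

variable {ι : Type*} [DecidableEq ι] {S : Finset ι} {a c : ι → ℝ} {L R M : ℝ} {γ : ι → ℝ → ℂ}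
  {i : ι}

/-- Between the source and the target of the strand `i` no strand of `S` begins or ends. -/
structure IsAdjacent (S : Finset ι) (a c : ι → ℝ) (i : ι) : Prop where
  mem : i ∈ S
  ne : a i ≠ c i
  source_notMem : ∀ l ∈ S.erase i, a l ∉ uIcc (a i) (c i)
  target_notMem : ∀ l ∈ S.erase i, c l ∉ uIcc (a i) (c i)

/-- The family `γ` with the strand `i` replaced by an arc below depth `M`. -/
noncomputable def insertCap (a c : ι → ℝ) (M : ℝ) (γ : ι → ℝ → ℂ) (i : ι) : ι → ℝ → ℂ :=
  Function.update γ i (cap (a i) (c i) (M + 2))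

theorem insertCap_self : insertCap a c M γ i i = cap (a i) (c i) (M + 2) :=
  Function.update_self ..

theorem insertCap_of_ne {l : ι} (hl : l ≠ i) : insertCap a c M γ i l = γ l :=
  Function.update_of_ne hl ..

theorem forall_mem_insertCap {P : ι → (ℝ → ℂ) → Prop} (hcap : P i (cap (a i) (c i) (M + 2)))
    (hγ : ∀ l ∈ S.erase i, P l (γ l)) : ∀ l ∈ S, P l (insertCap a c M γ i l) := fun l hl => by
  rcases eq_or_ne l i with rfl | hne
  · rwa [insertCap_self]
  · rw [insertCap_of_ne hne]
    exact hγ l (Finset.mem_erase.2 ⟨hne, hl⟩)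

namespace IsAdjacent

variable (hi : IsAdjacent S a c i) (h : IsLegDiagram (S.erase i) a c L R M γ)

include hi h

theorem re_notMem {l : ι} (hl : l ∈ S.erase i) {t : ℝ} (ht : (γ l t).im ≤ -M) :
    (γ l t).re ∉ uIcc (a i) (c i) := by
  rw [h.eq_of_le_abs l hl t (h.le_abs_of_im_le hl ht)]
  unfold foot
  split_ifs
  exacts [hi.source_notMem l hl, hi.target_notMem l hl]

theorem passages_insertCap {p : ℂ} (hp : p.re ∈ uIcc (a i) (c i) → -(M + 1) < p.im) :
    passages S (insertCap a c M γ i) p = passages (S.erase i) γ p := by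
  have hM := h.pos
  ext ⟨l, t⟩
  rcases eq_or_ne l i with rfl | hl
  · refine iff_of_false (fun hlt => ?_) (fun hlt => Finset.notMem_erase l S hlt.1)
    obtain ⟨-, rfl⟩ := hlt
    simp only [insertCap_self] at hp
    linarith [hp cap_re_mem, cap_im_le (u := a l) (v := c l) (t := t) (w := M + 2) (by linarith)]
  · simp [passages, hl, insertCap_of_ne hl]

theorem subsingleton_passages_insertCap {p : ℂ} (hre : p.re ∈ uIcc (a i) (c i))
    (him : p.im ≤ -(M + 1)) : (passages S (insertCap a c M γ i) p).Subsingleton := by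
  have hM := h.pos
  have hfst : ∀ q ∈ passages S (insertCap a c M γ i) p, q.1 = i := by
    rintro ⟨l, t⟩ ⟨hl, rfl⟩
    by_contra hne
    simp only [insertCap_of_ne hne] at hre him
    exact hi.re_notMem h (Finset.mem_erase.2 ⟨hne, hl⟩) (by linarith) hre
  rintro ⟨l, s⟩ hq ⟨m, t⟩ hq'
  obtain rfl : l = i := hfst _ hq
  obtain rfl : m = l := hfst _ hq'
  have heq := hq.2.trans hq'.2.symm
  simp only [insertCap_self] at heq
  rw [cap_injective (by linarith) hi.ne heq]

theorem subsingleton_passages_of_re_mem {p : ℂ} (hre : p.re ∈ uIcc (a i) (c i))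
    (him : p.im ≤ -M) : (passages (S.erase i) γ p).Subsingleton := by
  rintro ⟨l, t⟩ ⟨hl, rfl⟩
  exact (hi.re_notMem h hl him hre).elim

theorem multiplePoints_insertCap :
    multiplePoints S (insertCap a c M γ i) = multiplePoints (S.erase i) γ := by
  ext p
  by_cases hp : p.re ∈ uIcc (a i) (c i) → -(M + 1) < p.im
  · simp only [multiplePoints, mem_ofPred_eq, hi.passages_insertCap h hp]
  · push Not at hp
    exact iff_of_false (not_not.2 (hi.subsingleton_passages_insertCap h hp.1 hp.2))
      (not_not.2 (hi.subsingleton_passages_of_re_mem h hp.1 (by linarith)))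

theorem isLegDiagram_insertCap (hsource : a i ∈ Icc L R) (htarget : c i ∈ Icc L R) :
    IsLegDiagram S a c L R (M + 2) (insertCap a c M γ i) where
  pos := by linarith [h.pos]
  contDiff := forall_mem_insertCap contDiff_cap h.contDiff
  velocity_ne_zero := forall_mem_insertCap (P := fun _ f => ∀ t, deriv f t ≠ 0)
    (fun _ => deriv_cap_ne_zero (by linarith [h.pos]) hi.ne) h.velocity_ne_zero
  eq_of_le_abs := forall_mem_insertCap
    (P := fun l f => ∀ t, M + 2 ≤ |t| → f t = ⟨foot a c l t, -|t|⟩)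
    (fun _ ht => cap_of_le_abs (by linarith [h.pos]) ht)
    fun l hl t ht => h.eq_of_le_abs l hl t (by linarith)
  neg_lt_im := forall_mem_insertCap (P := fun _ f => ∀ t, |t| < M + 2 → -(M + 2) < (f t).im)
    (fun _ ht => (neg_lt_cap_im_iff (by linarith [h.pos])).2 ht) fun l hl t ht => by
      by_contra! him
      linarith [h.abs_eq_of_im_le hl (t := t) (by linarith)]
  re_mem := forall_mem_insertCap (P := fun _ f => ∀ t, (f t).re ∈ Icc L R)
    (fun _ => uIcc_subset_Icc hsource htarget cap_re_mem) h.re_mem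
  finite := by
    rw [hi.multiplePoints_insertCap h]
    exact h.finite
  triple p hp := by
    rw [hi.multiplePoints_insertCap h] at hp
    have him : p.re ∈ uIcc (a i) (c i) → -M < p.im := fun hre => by
      by_contra! him
      exact hp (hi.subsingleton_passages_of_re_mem h hre him)
    refine (h.triple p hp).congr (hi.passages_insertCap h fun hre => by linarith [him hre]) ?_
    rintro ⟨l, t⟩ ⟨hl, -⟩
    rw [velocity, velocity, insertCap_of_ne (Finset.ne_of_mem_erase hl)]

end IsAdjacent

end Cap

section Combinatorics

/-- Between any two points of `A` there is a point of `C`. -/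
def Separates (C A : Set ℝ) : Prop := ∀ x ∈ A, ∀ y ∈ A, x < y → ∃ z ∈ C, z ∈ Ioo x y

theorem Separates.exists_mem_uIoo {A C : Set ℝ} {x y : ℝ} (h : Separates C A) (hx : x ∈ A)
    (hy : y ∈ A) (hne : x ≠ y) : ∃ z ∈ C, z ∈ uIoo x y := by
  rcases hne.lt_or_gt with hlt | hlt
  · simpa [uIoo_of_lt hlt] using h x hx y hy hlt
  · simpa [uIoo_of_gt hlt] using h y hy x hx hlt

theorem Separates.diff_singleton {A C : Set ℝ} {x₀ y₀ : ℝ} (h : Separates C A) (hx₀ : x₀ ∈ A)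
    (hA : ∀ x ∈ A \ {x₀}, x ∉ uIcc x₀ y₀) : Separates (C \ {y₀}) (A \ {x₀}) := by
  rintro x hx y hy hxy
  obtain ⟨z, hzC, hz⟩ := h x hx.1 y hy.1 hxy
  rcases ne_or_eq z y₀ with hne | rfl
  · exact ⟨z, ⟨hzC, hne⟩, hz⟩
  have hxA := hA x hx
  have hyA := hA y hy
  rcases le_total x₀ z with hle | hle
  · rw [uIcc_of_le hle] at hxA hyA
    have hxx₀ : x < x₀ := not_le.1 fun hx₀x => hxA ⟨hx₀x, hz.1.le⟩
    obtain ⟨z', hzC', hz'⟩ := h x hx.1 x₀ hx₀ hxx₀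
    exact ⟨z', ⟨hzC', (hz'.2.trans_le hle).ne⟩, hz'.1, hz'.2.trans (hle.trans_lt hz.2)⟩
  · rw [uIcc_of_ge hle] at hxA hyA
    have hx₀y : x₀ < y := not_le.1 fun hyx₀ => hyA ⟨hz.2.le, hyx₀⟩
    obtain ⟨z', hzC', hz'⟩ := h x₀ hx₀ y hy.1 hx₀y
    exact ⟨z', ⟨hzC', (hle.trans_lt hz'.1).ne'⟩, (hz.1.trans_le hle).trans hz'.1, hz'.2⟩

/-- The positions `A` and `C` alternate along the line, starting with a position in `A`. -/
structure IsAlternating (A C : Set ℝ) : Prop where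
  separates_left : Separates C A
  separates_right : Separates A C
  exists_lt : ∀ y ∈ C, ∃ x ∈ A, x < y

theorem IsAlternating.diff_singleton {A C : Set ℝ} {x₀ y₀ : ℝ} (h : IsAlternating A C)
    (hx₀ : x₀ ∈ A) (hy₀ : y₀ ∈ C) (hA : ∀ x ∈ A \ {x₀}, x ∉ uIcc x₀ y₀)
    (hC : ∀ y ∈ C \ {y₀}, y ∉ uIcc x₀ y₀) : IsAlternating (A \ {x₀}) (C \ {y₀}) where
  separates_left := h.separates_left.diff_singleton hx₀ hA
  separates_right := h.separates_right.diff_singleton hy₀ (by rwa [uIcc_comm])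
  exists_lt y hy := by
    obtain ⟨x, hxA, hx⟩ := h.exists_lt y hy.1
    rcases ne_or_eq x x₀ with hne | rfl
    · exact ⟨x, ⟨hxA, hne⟩, hx⟩
    rcases le_total x y₀ with hle | hle
    · have hyC := hC y hy
      rw [uIcc_of_le hle] at hyC
      have hy₀y : y₀ < y := not_le.1 fun hyy₀ => hyC ⟨hx.le, hyy₀⟩
      obtain ⟨x', hxA', hx'⟩ := h.separates_right y₀ hy₀ y hy.1 hy₀y
      exact ⟨x', ⟨hxA', (hle.trans_lt hx'.1).ne'⟩, hx'.2⟩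
    · obtain ⟨x', hxA', hx'⟩ := h.exists_lt y₀ hy₀
      exact ⟨x', ⟨hxA', (hx'.trans_le hle).ne⟩, hx'.trans_le (hle.trans hx.le)⟩

variable {ι : Type*} {S : Finset ι} {a c : ι → ℝ} {L R : ℝ} {i j k : ι}

/-- The pairs of strands that have to cross: both run in the same direction, and the ends of
the second one are the ends of the first one shifted in that direction. -/
def crossingPairs (S : Finset ι) (a c : ι → ℝ) : Set (ι × ι) :=
  {pq | pq.1 ∈ S ∧ pq.2 ∈ S ∧ ((a pq.1 < a pq.2 ∧ a pq.2 < c pq.1 ∧ c pq.1 < c pq.2) ∨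
    (c pq.2 < c pq.1 ∧ c pq.1 < a pq.2 ∧ a pq.2 < a pq.1))}

theorem finite_crossingPairs : (crossingPairs S a c).Finite :=
  (S ×ˢ S).finite_toSet.subset fun _ hpq => by simpa using ⟨hpq.1, hpq.2.1⟩

section

variable (hsep : HasDistinctEnds S a c) (halt : IsAlternating (a '' S) (c '' S))

include hsep halt

theorem isAdjacent_of_forall_notMem [DecidableEq ι] (hi : i ∈ S)
    (h : ∀ l ∈ S, a l ∉ uIoo (a i) (c i)) :
    IsAdjacent S a c i := by
  have hsource : ∀ l ∈ S.erase i, a l ∉ uIcc (a i) (c i) := fun l hl hmem => by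
    obtain ⟨hne, hlS⟩ := Finset.mem_erase.1 hl
    have := hsep.injOn_source.ne hlS hi hne
    have := hsep.source_ne_target l hlS i hi
    have := h l hlS
    grind [mem_uIcc, uIoo]
  refine ⟨hi, hsep.source_ne_target i hi i hi, hsource, fun l hl hmem => ?_⟩
  obtain ⟨hne, hlS⟩ := Finset.mem_erase.1 hl
  obtain ⟨_, ⟨m, hm, rfl⟩, hmem'⟩ : ∃ z ∈ a '' S, z ∈ uIoo (c l) (c i) :=
    halt.separates_right.exists_mem_uIoo (mem_image_of_mem c hlS) (mem_image_of_mem c hi)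
      (hsep.injOn_target.ne hlS hi hne)
  refine h m hm ?_
  grind [uIoo, mem_uIcc]

theorem exists_isConsecutive_of_lt (hi : i ∈ S) (hj : j ∈ S) (hij : a i < a j)
    (h : ∀ l ∈ S, a l ∉ Ioo (a i) (a j)) : ∃ k, IsConsecutive S a c i k j := by
  obtain ⟨_, ⟨k, hk, rfl⟩, hik, hkj⟩ :=
    halt.separates_left _ (mem_image_of_mem a hi) _ (mem_image_of_mem a hj) hij
  refine ⟨k, hi, hk, hj, ⟨hik, hkj⟩, fun l hl hmem => ?_, fun l hl hmem => ?_⟩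
  · by_contra! hne
    exact h l hl ⟨hmem.1.lt_of_ne' (hsep.injOn_source.ne hl hi hne.1),
      hmem.2.lt_of_ne (hsep.injOn_source.ne hl hj hne.2)⟩
  · by_contra hne
    obtain ⟨_, ⟨m, hm, rfl⟩, hmem'⟩ : ∃ z ∈ a '' S, z ∈ uIoo (c l) (c k) :=
      halt.separates_right.exists_mem_uIoo (mem_image_of_mem c hl) (mem_image_of_mem c hk)
        (hsep.injOn_target.ne hl hk hne)
    grind [uIoo]

theorem exists_consecutive_sources [DecidableEq ι] (hS : S.Nonempty)
    (hna : ∀ i, ¬IsAdjacent S a c i) :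
    ∃ i ∈ S, ∃ j ∈ S, a i < a j ∧ a i < c i ∧ c j < a j ∧ ∀ l ∈ S, a l ∉ Ioo (a i) (a j) := by
  obtain ⟨m, hm, hmax⟩ := S.exists_max_image a hS
  have hmd : c m < a m := by
    by_contra hle
    refine hna m (isAdjacent_of_forall_notMem hsep halt hm fun l hl hmem => ?_)
    rw [uIoo_of_le (not_lt.1 hle)] at hmem
    exact (hmax l hl).not_gt hmem.1
  obtain ⟨j, hj, hjmin⟩ := (S.filter fun i => c i < a i).exists_min_image a
    ⟨m, Finset.mem_filter.2 ⟨hm, hmd⟩⟩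
  obtain ⟨hjS, hjd⟩ := Finset.mem_filter.1 hj
  obtain ⟨_, ⟨p, hp, rfl⟩, hpj⟩ := halt.exists_lt (c j) (mem_image_of_mem c hjS)
  obtain ⟨i, hi, himax⟩ := (S.filter fun i => a i < a j).exists_max_image a
    ⟨p, Finset.mem_filter.2 ⟨hp, hpj.trans hjd⟩⟩
  obtain ⟨hiS, hij⟩ := Finset.mem_filter.1 hi
  refine ⟨i, hiS, j, hjS, hij, ?_, hjd, fun l hl hmem =>
    (himax l (Finset.mem_filter.2 ⟨hl, hmem.2⟩)).not_gt hmem.1⟩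
  exact (hsep.source_ne_target i hiS i hiS).lt_of_le
    (not_lt.1 fun hlt => (hjmin i (Finset.mem_filter.2 ⟨hiS, hlt⟩)).not_gt hij)

theorem exists_isConsecutive [DecidableEq ι] (hS : S.Nonempty) (hna : ∀ i, ¬IsAdjacent S a c i) :
    ∃ i k j, IsConsecutive S a c i k j ∧ a j < c i ∧ c j < a i := by
  obtain ⟨i, hi, j, hj, hij, hii, hjj, hmem⟩ := exists_consecutive_sources hsep halt hS hna
  obtain ⟨k, hk⟩ := exists_isConsecutive_of_lt hsep halt hi hj hij hmem
  refine ⟨i, k, j, hk, ?_, ?_⟩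
  · by_contra! hle
    refine hna i (isAdjacent_of_forall_notMem hsep halt hi fun l hl hl' => ?_)
    rw [uIoo_of_lt hii] at hl'
    exact hmem l hl ⟨hl'.1, hl'.2.trans_le hle⟩
  · by_contra! hle
    refine hna j (isAdjacent_of_forall_notMem hsep halt hj fun l hl hl' => ?_)
    rw [uIoo_of_gt hjj] at hl'
    exact hmem l hl ⟨hle.trans_lt hl'.1, hl'.2⟩

end

theorem IsAdjacent.crossingPairs_erase [DecidableEq ι] (hi : IsAdjacent S a c i) :
    crossingPairs (S.erase i) a c = crossingPairs S a c := by
  ext ⟨p, q⟩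
  have hq := hi.source_notMem q
  have hp := hi.target_notMem p
  simp only [Finset.mem_erase, mem_uIcc] at hp hq
  simp only [crossingPairs, mem_ofPred_eq, Finset.mem_erase]
  grind

namespace IsConsecutive

variable (hs : IsConsecutive S a c i k j)

include hs

theorem flipIcc_source {l : ι} (hl : l ∈ S) :
    l = i ∧ flipIcc (a i) (a j) (a l) = a j ∨ l = j ∧ flipIcc (a i) (a j) (a l) = a i ∨
      a l ∉ Icc (a i) (a j) ∧ flipIcc (a i) (a j) (a l) = a l := by
  have hij := hs.source_lt.le
  by_cases hmem : a l ∈ Icc (a i) (a j)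
  · rcases hs.eq_or_eq_of_mem l hl hmem with rfl | rfl <;> simp [flipIcc_of_mem hmem]
  · simp [hmem, flipIcc_of_notMem hmem]

theorem flipIcc_target {l : ι} (hl : l ∈ S) :
    l = k ∧ flipIcc (a i) (a j) (c l) = a i + a j - c k ∨
      c l ∉ Icc (a i) (a j) ∧ flipIcc (a i) (a j) (c l) = c l := by
  by_cases hmem : c l ∈ Icc (a i) (a j)
  · obtain rfl := hs.eq_of_mem l hl hmem
    simp [flipIcc_of_mem hmem]
  · simp [hmem, flipIcc_of_notMem hmem]

theorem source_lt_flipIcc_target_iff {l m : ι} (hl : l ∈ S) (hm : m ∈ S) :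
    a l < flipIcc (a i) (a j) (c m) ↔ a l < c m := by
  have := hs.flipIcc_source hl
  have := hs.flipIcc_target hm
  have := hs.target_mem
  grind

theorem flipIcc_target_lt_source_iff {l m : ι} (hl : l ∈ S) (hm : m ∈ S) :
    flipIcc (a i) (a j) (c m) < a l ↔ c m < a l := by
  have := hs.flipIcc_source hl
  have := hs.flipIcc_target hm
  have := hs.target_mem
  grind

theorem flipIcc_target_lt_iff {l m : ι} (hl : l ∈ S) (hm : m ∈ S) :
    flipIcc (a i) (a j) (c l) < flipIcc (a i) (a j) (c m) ↔ c l < c m := by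
  have := hs.flipIcc_target hl
  have := hs.flipIcc_target hm
  have := hs.target_mem
  grind

theorem image_flipIcc_source : (flipIcc (a i) (a j) ∘ a) '' S = a '' S := by
  have hmaps : ∀ l ∈ S, flipIcc (a i) (a j) (a l) ∈ a '' S := fun l hl => by
    rcases hs.flipIcc_source hl with ⟨-, h⟩ | ⟨-, h⟩ | ⟨-, h⟩ <;> rw [h]
    exacts [mem_image_of_mem a hs.right_mem, mem_image_of_mem a hs.left_mem, mem_image_of_mem a hl]
  refine Subset.antisymm (image_subset_iff.2 hmaps) (image_subset_iff.2 fun l hl => ?_)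
  obtain ⟨m, hm, hml⟩ := hmaps l hl
  exact ⟨m, hm, by rw [Function.comp_apply, hml, flipIcc_flipIcc]⟩

theorem isAlternating_flipIcc (halt : IsAlternating (a '' S) (c '' S)) :
    IsAlternating ((flipIcc (a i) (a j) ∘ a) '' S) ((flipIcc (a i) (a j) ∘ c) '' S) := by
  rw [hs.image_flipIcc_source]
  refine ⟨?_, ?_, ?_⟩
  · rintro _ ⟨l, hl, rfl⟩ _ ⟨m, hm, rfl⟩ hlm
    obtain ⟨_, ⟨p, hp, rfl⟩, hlp, hpm⟩ :=
      halt.separates_left _ (mem_image_of_mem a hl) _ (mem_image_of_mem a hm) hlm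
    exact ⟨_, mem_image_of_mem _ hp, (hs.source_lt_flipIcc_target_iff hl hp).2 hlp,
      (hs.flipIcc_target_lt_source_iff hm hp).2 hpm⟩
  · rintro _ ⟨l, hl, rfl⟩ _ ⟨m, hm, rfl⟩ hlm
    obtain ⟨_, ⟨p, hp, rfl⟩, hlp, hpm⟩ := halt.separates_right _ (mem_image_of_mem c hl) _
      (mem_image_of_mem c hm) ((hs.flipIcc_target_lt_iff hl hm).1 hlm)
    exact ⟨_, mem_image_of_mem _ hp, (hs.flipIcc_target_lt_source_iff hp hl).2 hlp,
      (hs.source_lt_flipIcc_target_iff hp hm).2 hpm⟩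
  · rintro _ ⟨l, hl, rfl⟩
    obtain ⟨_, ⟨p, hp, rfl⟩, hpl⟩ := halt.exists_lt _ (mem_image_of_mem c hl)
    exact ⟨_, mem_image_of_mem _ hp, (hs.source_lt_flipIcc_target_iff hp hl).2 hpl⟩

variable (hi : a j < c i) (hj : c j < a i)

include hi hj

theorem mem_crossingPairs_iff {p q : ι} : (p, q) ∈ crossingPairs S a c ↔
    (p, q) ∈ crossingPairs S (flipIcc (a i) (a j) ∘ a) (flipIcc (a i) (a j) ∘ c) ∨
      p = k ∧ (q = i ∧ a k < a i ∨ q = j ∧ a j < a k) := by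
  have hk := hs.target_mem
  have hi' := hs.left_mem
  have hj' := hs.right_mem
  have hk' := hs.mid_mem
  by_cases hp : p ∈ S
  swap
  · grind [crossingPairs]
  by_cases hq : q ∈ S
  swap
  · grind [crossingPairs]
  simp only [crossingPairs, mem_ofPred_eq, Function.comp_apply]
  rw [mem_Ioo] at hk
  rcases hs.flipIcc_source hp with ⟨hpi, hp'⟩ | ⟨hpj, hp'⟩ | ⟨hp'', hp'⟩ <;>
  rcases hs.flipIcc_source hq with ⟨hqi, hq'⟩ | ⟨hqj, hq'⟩ | ⟨hq'', hq'⟩ <;>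
  rcases hs.flipIcc_target hp with ⟨hpk, hcp⟩ | ⟨hpk, hcp⟩ <;>
  rcases hs.flipIcc_target hq with ⟨hqk, hcq⟩ | ⟨hqk, hcq⟩ <;>
  rw [hp', hq', hcp, hcq] <;> clear hp' hq' hcp hcq <;> grind

theorem notMem_crossingPairs_flipIcc {q : ι} (hq : q = i ∨ q = j) : (k, q) ∉
    crossingPairs S (flipIcc (a i) (a j) ∘ a) (flipIcc (a i) (a j) ∘ c) := by
  rintro ⟨-, -, h⟩
  have hij := hs.source_lt
  simp only [Function.comp_apply, flipIcc_of_mem (Ioo_subset_Icc_self hs.target_mem)] at h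
  obtain ⟨hik, hkj⟩ := hs.target_mem
  rcases hq with rfl | rfl
  · rw [flipIcc_of_mem (left_mem_Icc.2 hij.le), flipIcc_of_notMem fun h => h.2.not_gt hi] at h
    rcases h with h | h <;> linarith
  · rw [flipIcc_of_mem (right_mem_Icc.2 hij.le), flipIcc_of_notMem fun h => h.1.not_gt hj] at h
    rcases h with h | h <;> linarith

theorem ncard_crossingPairs : (crossingPairs S a c).ncard =
    (crossingPairs S (flipIcc (a i) (a j) ∘ a) (flipIcc (a i) (a j) ∘ c)).ncard + 1 := by
  obtain ⟨s, hs'⟩ : ∃ s, ∀ q, q = i ∧ a k < a i ∨ q = j ∧ a j < a k ↔ q = s := by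
    have hk := hs.target_mem
    have hmem := hs.eq_or_eq_of_mem k hs.mid_mem
    rw [mem_Ioo] at hk
    rw [mem_Icc] at hmem
    by_cases hki : a k < a i
    · exact ⟨i, fun q => by grind⟩
    · exact ⟨j, fun q => by grind⟩
  have hinsert : crossingPairs S a c = insert (k, s)
      (crossingPairs S (flipIcc (a i) (a j) ∘ a) (flipIcc (a i) (a j) ∘ c)) := by
    ext ⟨p, q⟩
    rw [hs.mem_crossingPairs_iff hi hj, hs', mem_insert_iff, Prod.mk.injEq, or_comm]
  have hsij : s = i ∨ s = j := ((hs' s).2 rfl).imp And.left And.left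
  rw [hinsert, ncard_insert_of_notMem (hs.notMem_crossingPairs_flipIcc hi hj hsij)
    finite_crossingPairs]

end IsConsecutive

theorem HasDistinctEnds.erase [DecidableEq ι] (hsep : HasDistinctEnds S a c) (i : ι) :
    HasDistinctEnds (S.erase i) a c where
  injOn_source := hsep.injOn_source.mono (Finset.coe_subset.2 (S.erase_subset i))
  injOn_target := hsep.injOn_target.mono (Finset.coe_subset.2 (S.erase_subset i))
  source_ne_target l hl m hm :=
    hsep.source_ne_target l (Finset.mem_of_mem_erase hl) m (Finset.mem_of_mem_erase hm)

theorem image_erase_of_injOn [DecidableEq ι] {β : Type*} {f : ι → β} (hf : Set.InjOn f S)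
    (hi : i ∈ S) :
    f '' (S.erase i) = f '' S \ {f i} := by
  rw [Finset.coe_erase, hf.image_sdiff_subset (singleton_subset_iff.2 hi), image_singleton]

theorem IsAdjacent.isAlternating_erase [DecidableEq ι] (hi : IsAdjacent S a c i)
    (hsep : HasDistinctEnds S a c) (halt : IsAlternating (a '' S) (c '' S)) :
    IsAlternating (a '' (S.erase i)) (c '' (S.erase i)) := by
  have ha := image_erase_of_injOn hsep.injOn_source hi.mem
  have hc := image_erase_of_injOn hsep.injOn_target hi.mem
  rw [ha, hc]
  refine halt.diff_singleton (mem_image_of_mem a hi.mem) (mem_image_of_mem c hi.mem) ?_ ?_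
  · rw [← ha]
    exact forall_mem_image.2 hi.source_notMem
  · rw [← hc]
    exact forall_mem_image.2 hi.target_notMem

theorem exists_isLegDiagram (hsep : HasDistinctEnds S a c)
    (halt : IsAlternating (a '' S) (c '' S)) (ha : ∀ i ∈ S, a i ∈ Icc L R)
    (hc : ∀ i ∈ S, c i ∈ Icc L R) :
    ∃ M γ, IsLegDiagram S a c L R M γ ∧
      (multiplePoints S γ).ncard = (crossingPairs S a c).ncard := by
  induction hN : S.card + (crossingPairs S a c).ncard using Nat.strong_induction_on
    generalizing S a c with
  | _ N ih =>
  classical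
  subst hN
  rcases S.eq_empty_or_nonempty with rfl | hS
  · refine ⟨1, fun _ _ => 0, ⟨one_pos, ?_, ?_, ?_, ?_, ?_, ?_, ?_⟩, ?_⟩ <;>
      simp [multiplePoints, passages, crossingPairs]
  by_cases hadj : ∃ i, IsAdjacent S a c i
  · obtain ⟨i, hi⟩ := hadj
    have hcard := Finset.card_erase_lt_of_mem hi.mem
    obtain ⟨M, γ, h, hγ⟩ := ih _ (by rw [hi.crossingPairs_erase]; lia) (hsep.erase i)
      (hi.isAlternating_erase hsep halt) (fun l hl => ha l (Finset.mem_of_mem_erase hl))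
      (fun l hl => hc l (Finset.mem_of_mem_erase hl)) rfl
    refine ⟨M + 2, _, hi.isLegDiagram_insertCap h (ha i hi.mem) (hc i hi.mem), ?_⟩
    rw [hi.multiplePoints_insertCap h, hγ, hi.crossingPairs_erase]
  · obtain ⟨i, k, j, hijk, hi, hj⟩ := exists_isConsecutive hsep halt hS (not_exists.1 hadj)
    have hcard := hijk.ncard_crossingPairs hi hj
    have hmem {x : ℝ} : x ∈ Icc L R → flipIcc (a i) (a j) x ∈ Icc L R :=
      flipIcc_mem_Icc_of_mem (ha i hijk.left_mem) (ha j hijk.right_mem)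
    obtain ⟨M, γ, h, hγ⟩ := ih _ (by rw [hcard]; lia)
      (hsep.comp_injective (flipIcc_injective _ _)) (hijk.isAlternating_flipIcc halt)
      (fun l hl => hmem (ha l hl)) (fun l hl => hmem (hc l hl)) rfl
    refine ⟨M + 2, _, hijk.isLegDiagram_bendLegs h hsep, ?_⟩
    rw [hijk.ncard_multiplePoints_bendLegs h hsep, hγ, hcard]

end Combinatorics

section Disk

variable {κ L R M t : ℝ} {z w : ℂ}

/-- The map that wraps the half plane above height `-M` around the unit disk, with vertical lines
going to rays towards the centre and the point at position `x` and height `-M` to the point of the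
unit circle at angle `κ * x`. -/
noncomputable def diskMap (κ M : ℝ) (z : ℂ) : ℂ :=
  Complex.exp (κ * (z + M * Complex.I) * Complex.I)

theorem norm_diskMap : ‖diskMap κ M z‖ = Real.exp (-(κ * (z.im + M))) := by
  simp [diskMap, Complex.norm_exp]

theorem norm_diskMap_lt_one (hκ : 0 < κ) (hz : -M < z.im) : ‖diskMap κ M z‖ < 1 := by
  rw [norm_diskMap, Real.exp_lt_one_iff, neg_lt_zero]
  exact mul_pos hκ (by linarith)

theorem complexEquivPlane_diskMap (x : ℝ) :
    complexEquivPlane (diskMap κ M ⟨x, -M⟩) = unitPt (κ * x) := by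
  rw [← complexEquivPlane_exp, diskMap]
  congr 3
  apply Complex.ext <;> simp

theorem norm_unitPt (θ : ℝ) : ‖unitPt θ‖ = 1 := by
  rw [← complexEquivPlane_exp, LinearIsometryEquiv.norm_map, Complex.norm_exp_ofReal_mul_I]

theorem injOn_diskMap (hκ : 0 < κ) (hLR : κ * (R - L) < 2 * π) :
    InjOn (diskMap κ M) {z | z.re ∈ Icc L R} := by
  intro z hz w hw hzw
  obtain ⟨m, hm⟩ := Complex.exp_eq_exp_iff_exists_int.1 hzw
  have him : z.im = w.im := by simpa [hκ.ne'] using congrArg Complex.re hm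
  have hre : κ * z.re = κ * w.re + m * (2 * π) := by simpa using congrArg Complex.im hm
  have hbound : |κ * z.re - κ * w.re| < 2 * π := by
    rw [← mul_sub, abs_mul, abs_of_pos hκ]
    have hre_sub : |z.re - w.re| ≤ R - L :=
      abs_sub_le_iff.2 ⟨by linarith [hz.2, hw.1], by linarith [hz.1, hw.2]⟩
    exact (mul_le_mul_of_nonneg_left hre_sub hκ.le).trans_lt hLR
  have hm0 : m = 0 := by
    rw [hre, add_sub_cancel_left, abs_mul, abs_of_pos two_pi_pos] at hbound
    have habs : |(m : ℝ)| < 1 := lt_of_mul_lt_mul_right (by rwa [one_mul]) two_pi_pos.le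
    exact Int.abs_lt_one_iff.1 (mod_cast habs)
  refine Complex.ext (mul_left_cancel₀ hκ.ne' ?_) him
  rw [hre, hm0, Int.cast_zero, zero_mul, add_zero]

theorem hasDerivAt_diskMap : HasDerivAt (diskMap κ M) (κ * Complex.I * diskMap κ M z) z := by
  have h := ((((hasDerivAt_id z).add_const (M * Complex.I)).const_mul (κ : ℂ)).mul_const
    Complex.I).cexp
  refine HasDerivAt.congr_deriv h ?_
  rw [diskMap, id]
  ring

/-- The arc in the disk traced by the part of the strand `f` with parameters in `[-M, M]`. -/
noncomputable def diskArc (κ M : ℝ) (f : ℝ → ℂ) (t : ℝ) : Plane :=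
  complexEquivPlane (diskMap κ M (f ((2 * t - 1) * M)))

variable {f : ℝ → ℂ}

theorem contDiff_diskArc (hf : ContDiff ℝ (⊤ : ℕ∞) f) : ContDiff ℝ (⊤ : ℕ∞) (diskArc κ M f) := by
  unfold diskArc diskMap
  fun_prop

theorem hasDerivAt_diskArc (hf : ContDiff ℝ (⊤ : ℕ∞) f) :
    HasDerivAt (diskArc κ M f) (complexEquivPlane (2 * M * κ * Complex.I *
      diskMap κ M (f ((2 * t - 1) * M)) * deriv f ((2 * t - 1) * M))) t := by
  have hs : HasDerivAt (fun t : ℝ => (2 * t - 1) * M) (2 * M) t := by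
    simpa using (((hasDerivAt_id t).const_mul 2).sub_const 1).mul_const M
  have hfs := (hf.differentiable (by simp) ((2 * t - 1) * M)).hasDerivAt
  have h := complexEquivPlane.toContinuousLinearEquiv.hasFDerivAt.comp_hasDerivAt t
    ((hasDerivAt_diskMap (κ := κ) (M := M)).comp_of_eq t (hfs.scomp t hs) rfl)
  refine HasDerivAt.congr_deriv h (congrArg complexEquivPlane ?_)
  rw [Complex.real_smul, Function.comp_apply]
  push_cast
  ring

theorem inner_deriv_diskArc_self (hf : ContDiff ℝ (⊤ : ℕ∞) f) {r : ℝ}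
    (hr : deriv f ((2 * t - 1) * M) = r * Complex.I) :
    ⟪deriv (diskArc κ M f) t, diskArc κ M f t⟫ = -(2 * M * κ * r) * ‖diskArc κ M f t‖ ^ 2 := by
  have hradial : deriv (diskArc κ M f) t = (-(2 * M * κ * r)) • diskArc κ M f t := by
    rw [(hasDerivAt_diskArc hf).deriv, hr, diskArc, ← map_smul, Complex.real_smul]
    push_cast
    congr 1
    linear_combination (2 * M * κ * r * diskMap κ M (f ((2 * t - 1) * M))) * Complex.I_sq
  rw [hradial, real_inner_smul_left, real_inner_self_eq_norm_sq]

/-- The passage of the wrapped arcs that corresponds to the passage `q` of the unwrapped ones. -/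
noncomputable def diskPassage {n : ℕ} (M : ℝ) (q : Fin n × ℝ) : (Fin n × ℝ) ⊕ (Fin 0 × ℝ) :=
  Sum.inl (q.1, (q.2 / M + 1) / 2)

theorem injective_diskPassage {n : ℕ} (hM : M ≠ 0) :
    Function.Injective (diskPassage (n := n) M) := by
  rintro ⟨i, s⟩ ⟨j, t⟩ hst
  simpa [diskPassage, hM] using hst

namespace IsLegDiagram

variable {n : ℕ} {a c : Fin n → ℝ} {γ : Fin n → ℝ → ℂ}
  (h : IsLegDiagram Finset.univ a c L R M γ) (hsep : HasDistinctEnds Finset.univ a c)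
  (hκ : 0 < κ) (hLR : κ * (R - L) < 2 * π)

include h

theorem diskArc_zero (i : Fin n) : diskArc κ M (γ i) 0 = unitPt (κ * a i) := by
  have hM := h.pos
  rw [diskArc, show (2 * 0 - 1) * M = -M by ring, h.eq_of_le_abs i (Finset.mem_univ i) _
    (by rw [abs_neg, abs_of_pos hM]), foot_of_neg (neg_lt_zero.2 hM), abs_neg, abs_of_pos hM,
    complexEquivPlane_diskMap]

theorem diskArc_one (i : Fin n) : diskArc κ M (γ i) 1 = unitPt (κ * c i) := by
  have hM := h.pos
  rw [diskArc, show (2 * 1 - 1) * M = M by ring, h.eq_of_le_abs i (Finset.mem_univ i) _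
    (le_abs_self M), foot_of_nonneg hM.le, abs_of_pos hM, complexEquivPlane_diskMap]

theorem neg_lt_im_of_mem_Ioo (i : Fin n) (ht : t ∈ Ioo (0 : ℝ) 1) :
    -M < (γ i ((2 * t - 1) * M)).im := by
  refine h.neg_lt_im i (Finset.mem_univ i) _ ?_
  rw [abs_mul, abs_of_pos h.pos]
  exact mul_lt_of_lt_one_left h.pos (abs_lt.2 ⟨by linarith [ht.1], by linarith [ht.2]⟩)

theorem deriv_diskArc_ne_zero (hκ : 0 < κ) (i : Fin n) : deriv (diskArc κ M (γ i)) t ≠ 0 := by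
  rw [(hasDerivAt_diskArc (h.contDiff i (Finset.mem_univ i))).deriv]
  have hv : deriv (γ i) ((2 * t - 1) * M) ≠ 0 := h.velocity_ne_zero i (Finset.mem_univ i) _
  simp [hv, hκ.ne', h.pos.ne', diskMap]

theorem norm_diskArc_lt_one (hκ : 0 < κ) (i : Fin n) (ht : t ∈ Ioo (0 : ℝ) 1) :
    ‖diskArc κ M (γ i) t‖ < 1 := by
  rw [diskArc, LinearIsometryEquiv.norm_map]
  exact norm_diskMap_lt_one hκ (h.neg_lt_im_of_mem_Ioo i ht)

theorem norm_diskArc_zero (i : Fin n) : ‖diskArc κ M (γ i) 0‖ = 1 := by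
  rw [h.diskArc_zero, norm_unitPt]

theorem norm_diskArc_one (i : Fin n) : ‖diskArc κ M (γ i) 1‖ = 1 := by
  rw [h.diskArc_one, norm_unitPt]

theorem norm_diskArc_le_one (hκ : 0 < κ) (i : Fin n) (ht : t ∈ Icc (0 : ℝ) 1) :
    ‖diskArc κ M (γ i) t‖ ≤ 1 := by
  rcases eq_endpoints_or_mem_Ioo_of_mem_Icc ht with rfl | rfl | ht
  exacts [(h.norm_diskArc_zero i).le, (h.norm_diskArc_one i).le, (h.norm_diskArc_lt_one hκ i ht).le]

theorem inner_deriv_diskArc_zero_ne_zero (hκ : 0 < κ) (i : Fin n) :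
    ⟪deriv (diskArc κ M (γ i)) 0, diskArc κ M (γ i) 0⟫ ≠ 0 := by
  have hi := Finset.mem_univ i
  have hr : deriv (γ i) ((2 * 0 - 1) * M) = (1 : ℝ) * Complex.I :=
    (h.velocity_of_le_neg hi (by linarith)).trans (by simp)
  rw [inner_deriv_diskArc_self (h.contDiff i hi) hr, h.norm_diskArc_zero]
  simp [hκ.ne', h.pos.ne']

theorem inner_deriv_diskArc_one_ne_zero (hκ : 0 < κ) (i : Fin n) :
    ⟪deriv (diskArc κ M (γ i)) 1, diskArc κ M (γ i) 1⟫ ≠ 0 := by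
  have hi := Finset.mem_univ i
  have hr : deriv (γ i) ((2 * 1 - 1) * M) = (-1 : ℝ) * Complex.I :=
    (h.velocity_of_le hi (by linarith)).trans (by simp)
  rw [inner_deriv_diskArc_self (h.contDiff i hi) hr, h.norm_diskArc_one]
  simp [hκ.ne', h.pos.ne']

include hsep hκ hLR

theorem injective_diskArc_endpoints : Function.Injective
    (Sum.elim (fun i => diskArc κ M (γ i) 0) (fun i => diskArc κ M (γ i) 1)) := by
  have hinj : InjOn (fun x => unitPt (κ * x)) (Icc L R) := by
    intro x hx y hy hxy
    simp only [← complexEquivPlane_diskMap (M := M)] at hxy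
    exact congrArg Complex.re
      (injOn_diskMap hκ hLR (x₁ := ⟨x, -M⟩) (x₂ := ⟨y, -M⟩) hx hy (complexEquivPlane.injective hxy))
  have ha i := h.source_mem (Finset.mem_univ i)
  have hc i := h.target_mem (Finset.mem_univ i)
  simp only [h.diskArc_zero, h.diskArc_one]
  refine Function.Injective.sumElim (fun i j hij => ?_) (fun i j hij => ?_) fun i j hij => ?_
  · exact hsep.injOn_source (by simp) (by simp) (hinj (ha i) (ha j) hij)
  · exact hsep.injOn_target (by simp) (by simp) (hinj (hc i) (hc j) hij)
  · exact hsep.source_ne_target i (by simp) j (by simp) (hinj (ha i) (hc j) hij)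

/-- The arcs of the leg diagram `γ`, wrapped around the disk. -/
noncomputable def toPreDiagram : PreDiagram n 0 where
  arc i := diskArc κ M (γ i)
  loop := Fin.elim0
  arc_smooth i := contDiff_diskArc (h.contDiff i (Finset.mem_univ i))
  loop_smooth i := i.elim0
  loop_periodic i := i.elim0
  arc_immersed i _ _ := h.deriv_diskArc_ne_zero hκ i
  loop_immersed i := i.elim0
  arc_in_disk i _ ht := h.norm_diskArc_le_one hκ i ht
  arc_interior i _ ht := h.norm_diskArc_lt_one hκ i ht
  arc_start_bdry := h.norm_diskArc_zero
  arc_end_bdry := h.norm_diskArc_one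
  arc_transverse_start := h.inner_deriv_diskArc_zero_ne_zero hκ
  arc_transverse_end := h.inner_deriv_diskArc_one_ne_zero hκ
  loop_in_disk i := i.elim0
  endpoints_distinct := h.injective_diskArc_endpoints hsep hκ hLR

theorem passages_toPreDiagram {z : ℂ} (hz : -M < z.im) (hzLR : z.re ∈ Icc L R) :
    (h.toPreDiagram hsep hκ hLR).passages (complexEquivPlane (diskMap κ M z)) =
      diskPassage M '' passages Finset.univ γ z := by
  have hM := h.pos
  ext (⟨i, t⟩ | ⟨j, -⟩)
  swap; · exact j.elim0
  constructor
  · rintro ⟨-, ht⟩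
    refine ⟨(i, (2 * t - 1) * M), ⟨Finset.mem_univ i, ?_⟩, ?_⟩
    · exact injOn_diskMap hκ hLR (h.re_mem i (Finset.mem_univ i) _) hzLR
        (complexEquivPlane.injective ht)
    · rw [diskPassage]
      congr
      field_simp
      ring
  · rintro ⟨⟨j, s⟩, ⟨hj, hs⟩, heq⟩
    obtain ⟨rfl, rfl⟩ := Prod.mk.inj (Sum.inl_injective heq)
    have hsM : |s| < M := by
      by_contra! hle
      rw [← hs, h.eq_of_le_abs j hj s hle] at hz
      exact absurd hz (by simpa using hle)
    obtain ⟨hs₁, hs₂⟩ := abs_lt.1 hsM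
    have hs₁' : -1 < s / M := by rw [lt_div_iff₀ hM]; linarith
    have hs₂' : s / M < 1 := by rwa [div_lt_one hM]
    refine ⟨⟨by linarith, by linarith⟩, ?_⟩
    have hcancel : (2 * ((s / M + 1) / 2) - 1) * M = s := by field_simp; ring
    change diskArc κ M (γ j) _ = _
    rw [diskArc, hcancel, hs]

theorem isMultiplePoint_toPreDiagram_iff {z : ℂ} (hz : -M < z.im) (hzLR : z.re ∈ Icc L R) :
    (h.toPreDiagram hsep hκ hLR).IsMultiplePoint (complexEquivPlane (diskMap κ M z)) ↔
      z ∈ multiplePoints Finset.univ γ := by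
  rw [PreDiagram.IsMultiplePoint, h.passages_toPreDiagram hsep hκ hLR hz hzLR,
    (injective_diskPassage h.pos.ne').subsingleton_image_iff]
  rfl

theorem setOf_isMultiplePoint_toPreDiagram :
    {p | (h.toPreDiagram hsep hκ hLR).IsMultiplePoint p} =
      (fun z => complexEquivPlane (diskMap κ M z)) '' multiplePoints Finset.univ γ := by
  ext p
  constructor
  · intro hp
    obtain ⟨⟨i, t⟩ | ⟨j, -⟩, hq, -⟩ := not_subsingleton_iff.1 hp
    swap; · exact j.elim0
    obtain ⟨ht, rfl⟩ := hq
    exact ⟨_, (h.isMultiplePoint_toPreDiagram_iff hsep hκ hLR (h.neg_lt_im_of_mem_Ioo i ht)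
      (h.re_mem i (Finset.mem_univ i) _)).1 hp, rfl⟩
  · rintro ⟨z, hz, rfl⟩
    exact (h.isMultiplePoint_toPreDiagram_iff hsep hκ hLR
      (h.neg_lt_im_of_mem_multiplePoints hsep hz)
      (h.re_mem_of_mem_multiplePoints hz)).2 hz

theorem isAlternatingTriple_toPreDiagram {p : Plane}
    (hp : (h.toPreDiagram hsep hκ hLR).IsMultiplePoint p) :
    IsAlternatingTriple ((h.toPreDiagram hsep hκ hLR).passages p)
      (h.toPreDiagram hsep hκ hLR).tangent := by
  obtain ⟨z, hz, rfl⟩ := (h.setOf_isMultiplePoint_toPreDiagram hsep hκ hLR).subset hp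
  rw [h.passages_toPreDiagram hsep hκ hLR (h.neg_lt_im_of_mem_multiplePoints hsep hz)
    (h.re_mem_of_mem_multiplePoints hz)]
  have hM := h.pos
  have hT : (2 * M * κ * Complex.I * diskMap κ M z : ℂ) ≠ 0 := by
    simp [hκ.ne', hM.ne', diskMap]
  refine (h.triple z hz).image (injective_diskPassage hM.ne')
    (T := complexEquivPlane.toLinearEquiv.toLinearMap ∘ₗ
      LinearMap.mulLeft ℝ (2 * M * κ * Complex.I * diskMap κ M z))
    (complexEquivPlane.injective.comp (mul_right_injective₀ hT)) ?_
  rintro ⟨i, s⟩ ⟨hi, rfl⟩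
  have hcancel : (2 * ((s / M + 1) / 2) - 1) * M = s := by field_simp; ring
  change deriv (diskArc κ M (γ i)) ((s / M + 1) / 2) = _
  rw [(hasDerivAt_diskArc (h.contDiff i hi)).deriv, hcancel]
  rfl

/-- The triple diagram in the disk obtained by wrapping the leg diagram `γ` around it. -/
noncomputable def toTripleDiagram : TripleDiagram n 0 where
  toPreDiagram := h.toPreDiagram hsep hκ hLR
  multiple_finite := by
    rw [h.setOf_isMultiplePoint_toPreDiagram hsep hκ hLR]
    exact h.finite.image _
  triple _ hp := (h.isAlternatingTriple_toPreDiagram hsep hκ hLR hp).ncard_eq_three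
  branches_transverse _ hp _ hq₁ _ hq₂ hne :=
    (h.isAlternatingTriple_toPreDiagram hsep hκ hLR hp).pairwise_linearIndependent hq₁ hq₂ hne
  alternating _ hp := (h.isAlternatingTriple_toPreDiagram hsep hκ hLR hp).exists_pos_sum_eq_zero

theorem tripleCount_toTripleDiagram :
    (h.toTripleDiagram hsep hκ hLR).tripleCount = (multiplePoints Finset.univ γ).ncard := by
  refine (congrArg Set.ncard (h.setOf_isMultiplePoint_toPreDiagram hsep hκ hLR)).trans
    (InjOn.ncard_image fun z hz w hw hzw => ?_)
  exact injOn_diskMap hκ hLR (h.re_mem_of_mem_multiplePoints hz)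
    (h.re_mem_of_mem_multiplePoints hw) (complexEquivPlane.injective hzw)

end IsLegDiagram

end Disk

section MarkedPoints

variable {n : ℕ} {σ : Equiv.Perm (Fin n)}

/-- The index of the source of strand `i` among the marked points, as a position on the line. -/
def inPosition (i : Fin n) : ℝ := (2 * i : ℕ)

/-- The index of the target of strand `i` among the marked points, as a position on the line, for
strands that realize `σ`. -/
def outPosition (σ : Equiv.Perm (Fin n)) (i : Fin n) : ℝ := (2 * σ i + 1 : ℕ)

theorem hasDistinctEnds_inPosition_outPosition :
    HasDistinctEnds Finset.univ inPosition (outPosition σ) where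
  injOn_source i _ j _ hij := Fin.ext (by have := Nat.cast_injective (R := ℝ) hij; lia)
  injOn_target i _ j _ hij :=
    σ.injective (Fin.ext (by have := Nat.cast_injective (R := ℝ) hij; lia))
  source_ne_target i _ j _ hij := by have := Nat.cast_injective (R := ℝ) hij; lia

theorem separates_outPosition_inPosition :
    Separates (range (outPosition σ)) (range (inPosition (n := n))) := by
  rintro _ ⟨i, rfl⟩ _ ⟨j, rfl⟩ hij
  have hij : 2 * (i : ℕ) < 2 * j := Nat.cast_lt.1 hij
  refine ⟨_, ⟨σ.symm i, rfl⟩, ?_⟩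
  rw [outPosition, Equiv.apply_symm_apply]
  exact ⟨Nat.cast_lt.2 (by lia), Nat.cast_lt.2 (by lia)⟩

theorem separates_inPosition_outPosition :
    Separates (range (inPosition (n := n))) (range (outPosition σ)) := by
  rintro _ ⟨i, rfl⟩ _ ⟨j, rfl⟩ hij
  have hij : 2 * (σ i : ℕ) + 1 < 2 * σ j + 1 := Nat.cast_lt.1 hij
  exact ⟨_, ⟨σ j, rfl⟩, Nat.cast_lt.2 (by lia), Nat.cast_lt.2 (by lia)⟩

theorem isAlternating_inPosition_outPosition :
    IsAlternating (range (inPosition (n := n))) (range (outPosition σ)) where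
  separates_left := separates_outPosition_inPosition
  separates_right := separates_inPosition_outPosition
  exists_lt := by
    rintro _ ⟨i, rfl⟩
    exact ⟨_, ⟨σ i, rfl⟩, Nat.cast_lt.2 (by lia)⟩

theorem natCast_mem_Icc_of_lt_two_mul {k : ℕ} (hk : k < 2 * n) :
    (k : ℝ) ∈ Icc 0 (2 * n - 1 : ℝ) :=
  ⟨k.cast_nonneg, by rw [le_sub_iff_add_le]; exact_mod_cast hk⟩

theorem ncard_crossingPairs_inPosition_outPosition :
    (crossingPairs Finset.univ inPosition (outPosition σ)).ncard = Ncross n σ := by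
  rw [Ncross, ← Set.ncard_coe_finset]
  congr 1
  ext ⟨i, j⟩
  simp only [crossingPairs, inPosition, outPosition, Nat.cast_lt]
  grind

theorem exists_realizes_tripleCount_eq_Ncross (hn : n ≠ 0) (σ : Equiv.Perm (Fin n)) :
    ∃ D : TripleDiagram n 0, Realizes D σ ∧ D.tripleCount = Ncross n σ := by
  have hsep := hasDistinctEnds_inPosition_outPosition (σ := σ)
  obtain ⟨M, γ, h, hγ⟩ := exists_isLegDiagram (L := 0) (R := 2 * n - 1) hsep
    (by simpa using isAlternating_inPosition_outPosition)
    (fun i _ => natCast_mem_Icc_of_lt_two_mul (by lia))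
    (fun i _ => natCast_mem_Icc_of_lt_two_mul (by lia))
  have hn0 : (0 : ℝ) < n := by positivity
  have hκ : 0 < π / n := by positivity
  have hLR : π / n * (2 * n - 1 - 0) < 2 * π := by
    field_simp
    linarith
  refine ⟨h.toTripleDiagram hsep hκ hLR, fun i => ⟨?_, ?_⟩, ?_⟩
  · refine (h.diskArc_zero i).trans (congrArg unitPt ?_)
    rw [inPosition, mul_comm, mul_div_assoc]
  · refine (h.diskArc_one i).trans (congrArg unitPt ?_)
    rw [outPosition, mul_comm, mul_div_assoc]
  · rw [h.tripleCount_toTripleDiagram, hγ, ncard_crossingPairs_inPosition_outPosition]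

end MarkedPoints

/-- **Theorem (lower bound).** Every triple diagram whose arcs realize `σ` (loops
permitted) has at least `N(σ)` triple points; consequently the minimum number of triple
points over all triple diagrams whose arcs realize `σ` equals `N(σ)`. -/
theorem triple_diagram_Ncross_lower_bound (n : ℕ) (hn : 1 ≤ n) (σ : Equiv.Perm (Fin n)) :
    (∀ (nl : ℕ) (D : TripleDiagram n nl), Realizes D σ → Ncross n σ ≤ D.tripleCount) ∧
    IsLeast {k : ℕ | ∃ (nl : ℕ) (D : TripleDiagram n nl), Realizes D σ ∧ D.tripleCount = k}
      (Ncross n σ) := by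
  obtain ⟨D, hD, hcount⟩ := exists_realizes_tripleCount_eq_Ncross (Nat.one_le_iff_ne_zero.1 hn) σ
  refine ⟨fun nl D hD => Ncross_le_tripleCount hD, ⟨0, D, hD, hcount⟩, ?_⟩
  rintro k ⟨nl, D, hD, rfl⟩
  exact Ncross_le_tripleCount hD
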